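/- arXiv:1806.02456 — 3 statements merged into one kernel-verified Lean document; each statement's English description precedes it below -/
import Mathlib

section
/- Let u be a minimizer of the energy E, let U ⊆ I be an open interval and p ∈ [1, ∞). Suppose f is absolutely continuous on U in the integral sense: there is a locally integrable g : U → ℝⁿ with f(y) − f(x) = ∫_x^y g for all x, y ∈ U, and suppose ∫_U ‖g‖^p < ∞. Then there is a function ū equal to u almost everywhere and a locally integrable h : U → ℝⁿ with ū(y) − ū(x) = ∫_x^y h for all x, y ∈ U, satisfying ‖h(x)‖ ≤ ‖g(x)‖ for almost every x ∈ U; in particular ∫_U ‖h‖^p ≤ ∫_U ‖g‖^p. -/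
open MeasureTheory Set Filter
open scoped ENNReal

noncomputable section

/-- Square-integrability of `w` on the set `S`. -/
def SqIntOn {n : ℕ} (w : ℝ → EuclideanSpace ℝ (Fin n)) (S : Set ℝ) : Prop :=
  MeasureTheory.IntegrableOn (fun x => ‖w x‖ ^ 2) S

/-- The Rudin–Osher–Fatemi energy with fidelity weight `1/(2 lam)`, datum `f`,
on the interval `I = Ioo a b`. -/
def rofEnergy {n : ℕ} (lam a b : ℝ) (f w : ℝ → EuclideanSpace ℝ (Fin n)) : ℝ≥0∞ :=
  eVariationOn w (Set.Ioo a b) +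
    ENNReal.ofReal ((1 / (2 * lam)) * ∫ x in Set.Ioo a b, ‖w x - f x‖ ^ 2)

/-- `u` is a minimizer of the ROF energy among Borel measurable functions
square-integrable on `Ioo a b`. -/
def IsMinimizer {n : ℕ} (lam a b : ℝ) (f u : ℝ → EuclideanSpace ℝ (Fin n)) : Prop :=
  Measurable u ∧ SqIntOn u (Set.Ioo a b) ∧
    ∀ w : ℝ → EuclideanSpace ℝ (Fin n), Measurable w → SqIntOn w (Set.Ioo a b) →
      rofEnergy lam a b f u ≤ rofEnergy lam a b f w

section RofAux

theorem rofaux_ac_of_dist_le {X Y Z : Type*} [PseudoMetricSpace X] [PseudoMetricSpace Y]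
    [PseudoMetricSpace Z] {F : ℝ → X} {P : ℝ → Y} {Q : ℝ → Z} {a b C D : ℝ}
    (hP : AbsolutelyContinuousOnInterval P a b) (hQ : AbsolutelyContinuousOnInterval Q a b)
    (h : ∀ x ∈ uIcc a b, ∀ y ∈ uIcc a b,
      dist (F x) (F y) ≤ C * dist (P x) (P y) + D * dist (Q x) (Q y)) :
    AbsolutelyContinuousOnInterval F a b := by
  unfold AbsolutelyContinuousOnInterval at *
  have h1 := (hP.const_mul C).add (hQ.const_mul D)
  simp only [mul_zero, add_zero] at h1
  refine squeeze_zero' (Eventually.of_forall fun t => Finset.sum_nonneg fun _ _ => dist_nonneg)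
    ?_ h1
  have : ∀ᶠ E in (AbsolutelyContinuousOnInterval.totalLengthFilter ⊓
      𝓟 (AbsolutelyContinuousOnInterval.disjWithin a b)),
      E ∈ AbsolutelyContinuousOnInterval.disjWithin a b :=
    mem_inf_of_right (mem_principal_self _)
  filter_upwards [this] with E hE
  rw [Finset.mul_sum, Finset.mul_sum, ← Finset.sum_add_distrib]
  exact Finset.sum_le_sum fun i hi => h _ (hE.1 i hi).1 _ (hE.1 i hi).2

variable {E : Type*} [NormedAddCommGroup E] [InnerProductSpace ℝ E] [FiniteDimensional ℝ E]

theorem rofaux_ac_int {p : ℝ → E} {x y : ℝ} (hxy : x ≤ y)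
    (hp : IntervalIntegrable p volume x y) :
    AbsolutelyContinuousOnInterval (fun t => ∫ s in x..t, p s) x y := by
  have hG := hp.norm.absolutelyContinuousOnInterval_intervalIntegral (c := x) (by simp)
  refine rofaux_ac_of_dist_le (C := 1) (D := 0) hG hG ?_
  rw [uIcc_of_le hxy]
  intro s hs t ht
  have i1 : ∀ s ∈ Icc x y, IntervalIntegrable p volume x s := fun s hs =>
    hp.mono_set (by rw [uIcc_of_le hs.1, uIcc_of_le hxy]; exact Icc_subset_Icc_right hs.2)
  simp only [zero_mul, add_zero, one_mul]
  rw [Real.dist_eq, dist_eq_norm, intervalIntegral.integral_interval_sub_left (i1 s hs) (i1 t ht),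
    intervalIntegral.integral_interval_sub_left (i1 s hs).norm (i1 t ht).norm]
  exact intervalIntegral.norm_integral_le_abs_integral_norm

theorem rofaux_ac_prim {P p : ℝ → E} {x y : ℝ} (hxy : x ≤ y)
    (hp : IntervalIntegrable p volume x y)
    (hP : ∀ t ∈ Icc x y, P t - P x = ∫ s in x..t, p s) :
    AbsolutelyContinuousOnInterval P x y := by
  have h := rofaux_ac_int hxy hp
  refine rofaux_ac_of_dist_le (C := 1) (D := 0) h h ?_
  rw [uIcc_of_le hxy]
  intro s hs t ht
  rw [← hP s hs, ← hP t ht]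
  simp

theorem rofaux_deriv_prim {P p : ℝ → E} {x y : ℝ} (hxy : x ≤ y)
    (hp : IntervalIntegrable p volume x y)
    (hP : ∀ t ∈ Icc x y, P t - P x = ∫ s in x..t, p s) :
    ∀ᵐ t, t ∈ Ioo x y → HasDerivAt P (p t) t := by
  filter_upwards [hp.ae_hasDerivAt_integral] with t ht htm
  have h1 := ht (by rw [uIcc_of_le hxy]; exact Ioo_subset_Icc_self htm) x (by simp)
  have h2 := h1.add_const (P x)
  refine h2.congr_of_eventuallyEq ?_
  filter_upwards [Ioo_mem_nhds htm.1 htm.2] with s hs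
  rw [← hP s (Ioo_subset_Icc_self hs)]; simp

theorem rofaux_ibp {P p Q q : ℝ → E} {x y : ℝ} (hxy : x ≤ y)
    (hp : IntervalIntegrable p volume x y) (hq : IntervalIntegrable q volume x y)
    (hP : ∀ t ∈ Icc x y, P t - P x = ∫ s in x..t, p s)
    (hQ : ∀ t ∈ Icc x y, Q t - Q x = ∫ s in x..t, q s) :
    ∫ t in x..y, (inner ℝ (P t) (q t) + inner ℝ (p t) (Q t))
      = inner ℝ (P y) (Q y) - inner ℝ (P x) (Q x) := by
  have hPa := rofaux_ac_prim hxy hp hP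
  have hQa := rofaux_ac_prim hxy hq hQ
  obtain ⟨C, hC⟩ := hPa.exists_bound
  obtain ⟨D, hD⟩ := hQa.exists_bound
  have hac : AbsolutelyContinuousOnInterval (fun t => inner ℝ (P t) (Q t)) x y := by
    refine rofaux_ac_of_dist_le (C := D) (D := C) hPa hQa ?_
    intro s hs t ht
    rw [Real.dist_eq, dist_eq_norm, dist_eq_norm]
    have : inner ℝ (P s) (Q s) - inner ℝ (P t) (Q t)
        = inner ℝ (P s - P t) (Q s) + inner ℝ (P t) (Q s - Q t) := by
      rw [inner_sub_left, inner_sub_right]; ring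
    rw [this]
    refine (abs_add_le _ _).trans (add_le_add ?_ ?_)
    · refine (abs_real_inner_le_norm _ _).trans ?_
      rw [mul_comm]
      exact mul_le_mul_of_nonneg_right (hD s hs) (norm_nonneg _)
    · refine (abs_real_inner_le_norm _ _).trans ?_
      exact mul_le_mul_of_nonneg_right (hC t ht) (norm_nonneg _)
  rw [← hac.integral_deriv_eq_sub]
  apply intervalIntegral.integral_congr_ae
  have hne : ∀ᵐ t : ℝ, t ≠ y := by simp [ae_iff, measure_singleton]
  filter_upwards [rofaux_deriv_prim hxy hp hP, rofaux_deriv_prim hxy hq hQ, hne] with t h1 h2 h3 h4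
  rw [uIoc_of_le hxy] at h4
  have h5 : t ∈ Ioo x y := ⟨h4.1, lt_of_le_of_ne h4.2 h3⟩
  exact ((h1 h5).inner ℝ (h2 h5)).deriv.symm

theorem rofaux_final [MeasurableSpace E] [BorelSpace E] {u g : ℝ → E} {c d : ℝ}
    (hg : LocallyIntegrableOn g (Ioo c d))
    (hb : ∀ x ∈ Ioo c d, ∀ y ∈ Ioo c d, x ≤ y → ‖u y - u x‖ ≤ ∫ t in x..y, ‖g t‖) :
    ∃ h : ℝ → E, LocallyIntegrableOn h (Ioo c d) ∧
      (∀ x ∈ Ioo c d, ∀ y ∈ Ioo c d, u y - u x = ∫ t in x..y, h t) ∧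
      (∀ᵐ x ∂(volume.restrict (Ioo c d)), ‖h x‖ ≤ ‖g x‖) := by
  have hgi : ∀ x ∈ Ioo c d, ∀ y ∈ Ioo c d, IntervalIntegrable g volume x y := by
    intro x hx y hy
    rw [intervalIntegrable_iff']
    exact hg.integrableOn_compact_subset (ordConnected_Ioo.uIcc_subset hx hy) isCompact_uIcc
  have hloc : ∀ x ∈ Ioo c d, ∀ y ∈ Ioo c d, x ≤ y →
      AbsolutelyContinuousOnInterval u x y ∧
      ∀ᵐ t, t ∈ Ioo x y → HasDerivAt u (deriv u t) t ∧ ‖deriv u t‖ ≤ ‖g t‖ := by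
    intro x hx y hy hxy
    have hgn := (hgi x hx y hy).norm
    have hG := hgn.absolutelyContinuousOnInterval_intervalIntegral (c := x) (by simp)
    have hsub : Icc x y ⊆ Ioo c d := ordConnected_Ioo.out hx hy
    have key : ∀ s ∈ Icc x y, ∀ t ∈ Icc x y,
        dist (u s) (u t) ≤ |(∫ r in x..s, ‖g r‖) - ∫ r in x..t, ‖g r‖| := by
      intro s hs t ht
      rw [intervalIntegral.integral_interval_sub_left (hgi x hx s (hsub hs)).norm
        (hgi x hx t (hsub ht)).norm]
      rcases le_total s t with h | h
      · rw [dist_comm, dist_eq_norm, intervalIntegral.integral_symm, abs_neg]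
        exact (hb s (hsub hs) t (hsub ht) h).trans (le_abs_self _)
      · rw [dist_eq_norm]
        exact (hb t (hsub ht) s (hsub hs) h).trans (le_abs_self _)
    have hac : AbsolutelyContinuousOnInterval u x y := by
      refine rofaux_ac_of_dist_le (C := 1) (D := 0) hG hG ?_
      rw [uIcc_of_le hxy]
      intro s hs t ht
      simpa [Real.dist_eq] using key s hs t ht
    refine ⟨hac, ?_⟩
    have hne : ∀ᵐ t : ℝ, t ≠ y := by simp [ae_iff, measure_singleton]
    filter_upwards [hac.boundedVariationOn.ae_differentiableAt_of_mem_uIcc,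
      hgn.ae_hasDerivAt_integral] with t h1 h2 h3
    have h3' := Ioo_subset_Icc_self h3
    rw [← uIcc_of_le hxy] at h3'
    have hd := (h1 h3').hasDerivAt
    refine ⟨hd, ?_⟩
    have hd2 := h2 h3' x (by simp)
    have e1 := (hasDerivAt_iff_tendsto_slope.1 hd).norm
    have e2 := (hasDerivAt_iff_tendsto_slope.1 hd2).norm
    rw [norm_norm] at e2
    refine le_of_tendsto_of_tendsto e1 e2 ?_
    filter_upwards [nhdsWithin_le_nhds (Ioo_mem_nhds h3.1 h3.2)] with s hs
    simp only [slope, vsub_eq_sub, norm_smul]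
    refine mul_le_mul_of_nonneg_left ?_ (norm_nonneg _)
    rw [← dist_eq_norm]
    exact key s (Ioo_subset_Icc_self hs) t (Ioo_subset_Icc_self h3)
  -- global ae statement
  have hae : ∀ᵐ t, t ∈ Ioo c d → HasDerivAt u (deriv u t) t ∧ ‖deriv u t‖ ≤ ‖g t‖ := by
    have : ∀ r : ℚ × ℚ, ∀ᵐ t, (r.1 : ℝ) ∈ Ioo c d → (r.2 : ℝ) ∈ Ioo c d → (r.1 : ℝ) ≤ r.2 →
        t ∈ Ioo (r.1 : ℝ) r.2 → HasDerivAt u (deriv u t) t ∧ ‖deriv u t‖ ≤ ‖g t‖ := by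
      intro r
      by_cases h1 : (r.1 : ℝ) ∈ Ioo c d ∧ (r.2 : ℝ) ∈ Ioo c d ∧ (r.1 : ℝ) ≤ r.2
      · filter_upwards [(hloc _ h1.1 _ h1.2.1 h1.2.2).2] with t ht _ _ _ using ht
      · exact Eventually.of_forall fun t a b c => absurd ⟨a, b, c⟩ h1
    filter_upwards [ae_all_iff.2 this] with t ht htm
    obtain ⟨r, hr1, hr2⟩ := exists_rat_btwn htm.1
    obtain ⟨s, hs1, hs2⟩ := exists_rat_btwn htm.2
    exact ht (r, s) ⟨hr1, hr2.trans htm.2⟩ ⟨htm.1.trans hs1, hs2⟩ (hr2.trans hs1).le ⟨hr2, hs1⟩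
  have hbd : ∀ᵐ t, ‖(Ioo c d).indicator (deriv u) t‖ ≤ ‖g t‖ := by
    filter_upwards [hae] with t ht
    by_cases h : t ∈ Ioo c d
    · rw [indicator_of_mem h]; exact (ht h).2
    · rw [indicator_of_notMem h]; simp
  have hmeas : AEStronglyMeasurable ((Ioo c d).indicator (deriv u)) volume :=
    ((stronglyMeasurable_deriv u).indicator measurableSet_Ioo).aestronglyMeasurable
  refine ⟨(Ioo c d).indicator (deriv u), hg.mono hmeas hbd, ?_, ae_restrict_of_ae hbd⟩
  suffices H : ∀ x ∈ Ioo c d, ∀ y ∈ Ioo c d, x ≤ y →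
      u y - u x = ∫ t in x..y, (Ioo c d).indicator (deriv u) t by
    intro x hx y hy
    rcases le_total x y with h | h
    · exact H x hx y hy h
    · rw [intervalIntegral.integral_symm, ← H y hy x hx h]; simp
  intro x hx y hy hxy
  have hsub : Icc x y ⊆ Ioo c d := ordConnected_Ioo.out hx hy
  set h := (Ioo c d).indicator (deriv u) with hh
  have hi : IntervalIntegrable h volume x y :=
    (hgi x hx y hy).mono_fun hmeas.restrict (ae_restrict_of_ae hbd)
  have hA := rofaux_ac_int hxy hi
  have hB := (hloc x hx y hy hxy).1.sub hA
  have hne : ∀ᵐ t : ℝ, t ≠ x ∧ t ≠ y := by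
    refine Filter.Eventually.and ?_ ?_ <;> simp [ae_iff, measure_singleton]
  obtain ⟨C, hC⟩ := hB.const_of_ae_hasDerivAt_zero (by
    filter_upwards [hae, hi.ae_hasDerivAt_integral] with t h1 h2 h3
    have h4 : t ∈ Ioo c d := hsub (by rwa [uIcc_of_le hxy] at h3)
    have := (h1 h4).1.sub (h2 h3 x (by simp))
    rwa [hh, indicator_of_mem h4, sub_self] at this)
  have c1 := hC x (by simp)
  have c2 := hC y (by simp)
  simp only [Pi.sub_apply, intervalIntegral.integral_same, sub_zero] at c1 c2
  rw [c1, ← c2]; abel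

theorem rofaux_int_inner {k w : ℝ → E} {x y C : ℝ} (hxy : x ≤ y)
    (hk : IntervalIntegrable k volume x y)
    (hw : AEStronglyMeasurable w (volume.restrict (Icc x y)))
    (hC : ∀ t ∈ Icc x y, ‖w t‖ ≤ C) :
    IntervalIntegrable (fun t => inner ℝ (k t) (w t)) volume x y := by
  rw [intervalIntegrable_iff_integrableOn_Icc_of_le hxy] at hk ⊢
  refine Integrable.mono' (hk.norm.mul_const C) (hk.aestronglyMeasurable.inner hw) ?_
  refine (ae_restrict_iff' measurableSet_Icc).2 (Eventually.of_forall fun t ht => ?_)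
  exact (norm_inner_le_norm _ _).trans (mul_le_mul_of_nonneg_left (hC t ht) (norm_nonneg _))

theorem rofaux_core [MeasurableSpace E] [BorelSpace E] {a b lam : ℝ} (hlam : 0 < lam)
    {f u k z g : ℝ → E}
    (hfm : Measurable f) (hum : Measurable u) (hk : ∀ t, u t - f t = lam • k t)
    (hki : ∀ x ∈ Ioo a b, ∀ y ∈ Ioo a b, IntervalIntegrable k volume x y)
    (hz : ∀ x ∈ Ioo a b, ∀ y ∈ Ioo a b, z y - z x = ∫ t in x..y, k t)
    (hz1 : ∀ x ∈ Ioo a b, ‖z x‖ ≤ 1)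
    (hbv : BoundedVariationOn u (Ioo a b))
    (hK : ∀ x ∈ Ioo a b, ∀ y ∈ Ioo a b, x ≤ y → (eVariationOn u (Icc x y)).toReal ≤
      -(∫ t in x..y, inner ℝ (k t) (u t - u x)) + inner ℝ (z y) (u y - u x))
    {c d : ℝ} (hU : Ioo c d ⊆ Ioo a b) (hg : LocallyIntegrableOn g (Ioo c d))
    (hfg : ∀ x ∈ Ioo c d, ∀ y ∈ Ioo c d, f y - f x = ∫ t in x..y, g t) :
    ∀ x ∈ Ioo c d, ∀ y ∈ Ioo c d, x ≤ y → ‖u y - u x‖ ≤ ∫ t in x..y, ‖g t‖ := by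
  have hsubI : ∀ x ∈ Ioo a b, ∀ y ∈ Ioo a b, Icc x y ⊆ Ioo a b :=
    fun x hx y hy => ordConnected_Ioo.out hx hy
  have hsubU : ∀ x ∈ Ioo c d, ∀ y ∈ Ioo c d, Icc x y ⊆ Ioo c d :=
    fun x hx y hy => ordConnected_Ioo.out hx hy
  have hgi : ∀ x ∈ Ioo c d, ∀ y ∈ Ioo c d, IntervalIntegrable g volume x y := by
    intro x hx y hy
    rw [intervalIntegrable_iff']
    exact hg.integrableOn_compact_subset (ordConnected_Ioo.uIcc_subset hx hy) isCompact_uIcc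
  -- variation bound
  have hT : ∀ x ∈ Ioo a b, ∀ y ∈ Ioo a b, ∀ s ∈ Icc x y, ∀ t ∈ Icc x y,
      ‖u s - u t‖ ≤ (eVariationOn u (Icc x y)).toReal := by
    intro x hx y hy s hs t ht
    rw [← dist_eq_norm]
    exact (hbv.mono (hsubI x hx y hy)).dist_le hs ht
  -- continuity of z
  have hzc : ContinuousOn z (Ioo a b) := by
    intro x hx
    obtain ⟨x1, h1, h2⟩ := exists_between hx.1
    obtain ⟨x2, h3, h4⟩ := exists_between hx.2
    have m1 : x1 ∈ Ioo a b := ⟨h1, h2.trans hx.2⟩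
    have m2 : x2 ∈ Ioo a b := ⟨hx.1.trans h3, h4⟩
    have := (rofaux_ac_prim (h2.trans h3).le (hki x1 m1 x2 m2)
      (fun t ht => hz x1 m1 t (hsubI x1 m1 x2 m2 ht))).continuousOn
    rw [uIcc_of_le (h2.trans h3).le] at this
    exact (this.continuousAt (Icc_mem_nhds h2 h3)).continuousWithinAt
  have hzm : ∀ x ∈ Ioo a b, ∀ y ∈ Ioo a b,
      AEStronglyMeasurable z (volume.restrict (Icc x y)) := fun x hx y hy =>
    (hzc.mono (hsubI x hx y hy)).aestronglyMeasurable measurableSet_Icc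
  -- Lemma A
  have hA : ∀ x ∈ Ioo a b, ∀ y ∈ Ioo a b, x ≤ y → (∀ t ∈ Icc x y, ‖z t‖ < 1) → u x = u y := by
    intro x hx y hy hxy hlt
    have est : ∀ s ∈ Icc x y, ∀ t ∈ Icc x y, s ≤ t → (∫ r in s..t, ‖k r‖) + ‖z t‖ < 1 →
        u s = u t := by
      intro s hs t ht hst h1
      have hs' := hsubI x hx y hy hs
      have ht' := hsubI x hx y hy ht
      have h2 := hK s hs' t ht' hst
      set T := (eVariationOn u (Icc s t)).toReal with hTdef
      have hT0 : 0 ≤ T := ENNReal.toReal_nonneg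
      have h3 : ‖∫ r in s..t, inner ℝ (k r) (u r - u s)‖ ≤ ∫ r in s..t, ‖k r‖ * T := by
        refine intervalIntegral.norm_integral_le_of_norm_le hst ?_
          ((hki s hs' t ht').norm.mul_const T)
        refine Eventually.of_forall fun r hr => ?_
        exact (norm_inner_le_norm _ _).trans (mul_le_mul_of_nonneg_left
          (hT s hs' t ht' r (Ioc_subset_Icc_self hr) s ⟨le_rfl, hst⟩) (norm_nonneg _))
      rw [intervalIntegral.integral_mul_const, Real.norm_eq_abs] at h3
      have h4 : inner ℝ (z t) (u t - u s) ≤ ‖z t‖ * T :=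
        (real_inner_le_norm _ _).trans (mul_le_mul_of_nonneg_left
          (hT s hs' t ht' t ⟨hst, le_rfl⟩ s ⟨le_rfl, hst⟩) (norm_nonneg _))
      have h5 := neg_abs_le (∫ r in s..t, inner ℝ (k r) (u r - u s))
      have h6 : T = 0 := by nlinarith
      have h7 := hT s hs' t ht' s ⟨le_rfl, hst⟩ t ⟨hst, le_rfl⟩
      rw [← hTdef, h6] at h7
      exact sub_eq_zero.1 (norm_le_zero_iff.1 h7)
    refine isPreconnected_Icc.induction₂ (s := Icc x y) (fun s t => u s = u t) ?_
      (fun _ _ _ _ _ _ h1 h2 => h1.trans h2) (fun _ _ _ _ h => h.symm)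
      (left_mem_Icc.2 hxy) (right_mem_Icc.2 hxy)
    intro s hs
    have hN : ContinuousOn (fun t => ∫ r in x..t, ‖k r‖) (Icc x y) := by
      have := ((hki x hx y hy).norm.absolutelyContinuousOnInterval_intervalIntegral
        (c := x) (by simp)).continuousOn
      rwa [uIcc_of_le hxy] at this
    have hzc' := hzc.mono (hsubI x hx y hy)
    have c1 : ContinuousWithinAt (fun t => ((∫ r in x..t, ‖k r‖) - ∫ r in x..s, ‖k r‖) + ‖z t‖)
        (Icc x y) s := ((hN s hs).sub continuousWithinAt_const).add (hzc' s hs).norm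
    have c2 : ContinuousWithinAt (fun t => ((∫ r in x..s, ‖k r‖) - ∫ r in x..t, ‖k r‖) + ‖z s‖)
        (Icc x y) s := (continuousWithinAt_const.sub (hN s hs)).add continuousWithinAt_const
    have e1 := Filter.Tendsto.eventually_lt_const (u := (1 : ℝ)) (by simpa using hlt s hs) c1
    have e2 := Filter.Tendsto.eventually_lt_const (u := (1 : ℝ)) (by simpa using hlt s hs) c2
    filter_upwards [e1, e2, self_mem_nhdsWithin] with t h1 h2 ht
    have i1 := (hki x hx t (hsubI x hx y hy ht)).norm
    have i2 := (hki x hx s (hsubI x hx y hy hs)).norm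
    rw [intervalIntegral.integral_interval_sub_left i1 i2] at h1
    rw [intervalIntegral.integral_interval_sub_left i2 i1] at h2
    rcases le_total s t with h | h
    · exact est s hs t ht h h1
    · exact (est t ht s hs h h2).symm
  -- Lemma B
  have hB : ∀ x ∈ Ioo c d, ∀ y ∈ Ioo c d, x ≤ y → (eVariationOn u (Icc x y)).toReal ≤
      (∫ t in x..y, ‖g t‖) + inner ℝ (z y) (u y - f y) - inner ℝ (z x) (u x - f x) := by
    intro x hx y hy hxy
    have hx' := hU hx
    have hy' := hU hy
    have hfprim : ∀ t ∈ Icc x y, (f t - u x) - (f x - u x) = ∫ s in x..t, g s := by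
      intro t ht
      rw [← hfg x hx t (hsubU x hx y hy ht)]; abel
    obtain ⟨C, hC⟩ := (rofaux_ac_prim (P := fun t => f t - u x) hxy (hgi x hx y hy)
      hfprim).exists_bound
    rw [uIcc_of_le hxy] at hC
    have i1 : IntervalIntegrable (fun t => inner ℝ (k t) (u t - u x)) volume x y :=
      rofaux_int_inner hxy (hki x hx' y hy') (hum.sub_const _).aestronglyMeasurable
        (fun t ht => hT x hx' y hy' t ht x ⟨le_rfl, hxy⟩)
    have i2 : IntervalIntegrable (fun t => inner ℝ (k t) (f t - u x)) volume x y :=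
      rofaux_int_inner hxy (hki x hx' y hy') (hfm.sub_const _).aestronglyMeasurable hC
    have i3 : IntervalIntegrable (fun t => inner ℝ (z t) (g t)) volume x y := by
      have := rofaux_int_inner hxy (hgi x hx y hy) (hzm x hx' y hy')
        (fun t ht => hz1 t (hsubI x hx' y hy' ht))
      simpa only [real_inner_comm] using this
    have h1 : ∫ t in x..y, inner ℝ (k t) (f t - u x) ≤ ∫ t in x..y, inner ℝ (k t) (u t - u x) := by
      refine intervalIntegral.integral_mono_on hxy i2 i1 fun t ht => ?_
      have : u t - u x = (f t - u x) + lam • k t := by rw [← hk]; abel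
      rw [this, inner_add_right, real_inner_smul_right, real_inner_self_eq_norm_sq]
      nlinarith [sq_nonneg ‖k t‖]
    have h2 := rofaux_ibp (Q := fun t => f t - u x) hxy (hki x hx' y hy') (hgi x hx y hy)
      (fun t ht => hz x hx' t (hsubI x hx' y hy' ht)) hfprim
    rw [intervalIntegral.integral_add i3 i2] at h2
    have h3 : ∫ t in x..y, inner ℝ (z t) (g t) ≤ ∫ t in x..y, ‖g t‖ := by
      refine intervalIntegral.integral_mono_on hxy i3 (hgi x hx y hy).norm fun t ht => ?_
      refine (real_inner_le_norm _ _).trans ?_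
      exact mul_le_of_le_one_left (norm_nonneg _) (hz1 t (hsubI x hx' y hy' ht))
    have h4 := hK x hx' y hy' hxy
    simp only [inner_sub_right] at *
    linarith
  -- Lemma C
  have hC0 : ∀ x ∈ Ioo a b, ∀ y ∈ Ioo a b, x ≤ y →
      IntervalIntegrable (fun t => inner ℝ (z t) (u t - f t)) volume x y ∧
      (2 / lam) * (∫ t in x..y, inner ℝ (z t) (u t - f t)) = ‖z y‖ ^ 2 - ‖z x‖ ^ 2 := by
    intro x hx y hy hxy
    have i1 := rofaux_int_inner hxy (hki x hx y hy) (hzm x hx y hy)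
        (fun t ht => hz1 t (hsubI x hx y hy ht))
    have hp := fun t ht => hz x hx t (hsubI x hx y hy ht)
    have h := rofaux_ibp hxy (hki x hx y hy) (hki x hx y hy) hp hp
    have e : ∀ t, inner ℝ (z t) (u t - f t) = lam * inner ℝ (k t) (z t) := by
      intro t; rw [hk, real_inner_smul_right, real_inner_comm]
    simp only [e]
    refine ⟨i1.const_mul lam, ?_⟩
    rw [intervalIntegral.integral_const_mul]
    rw [real_inner_self_eq_norm_sq, real_inner_self_eq_norm_sq] at h
    rw [← h]
    have : ∀ t, inner ℝ (z t) (k t) + inner ℝ (k t) (z t) = 2 * inner ℝ (k t) (z t) := by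
      intro t; rw [real_inner_comm]; ring
    simp only [this]
    rw [intervalIntegral.integral_const_mul]
    field_simp
  have hCl : ∀ s ∈ Ioo a b, ∀ x ∈ Ioo a b, s < x → ‖z x‖ = 1 →
      ∃ t ∈ Ioo s x, 0 ≤ inner ℝ (z t) (u t - f t) := by
    intro s hs x hx hsx h1
    by_contra! hcon
    obtain ⟨i, e⟩ := hC0 s hs x hx hsx.le
    have h2 := intervalIntegral.intervalIntegral_pos_of_pos_on i.neg
      (fun t ht => by simpa using hcon t ht) hsx
    simp only [Pi.neg_apply, intervalIntegral.integral_neg] at h2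
    have h3 := hz1 s hs
    have h4 : 0 < 2 / lam := by positivity
    rw [h1] at e
    nlinarith [norm_nonneg (z s)]
  have hCr : ∀ s ∈ Ioo a b, ∀ x ∈ Ioo a b, x < s → ‖z x‖ = 1 →
      ∃ t ∈ Ioo x s, inner ℝ (z t) (u t - f t) ≤ 0 := by
    intro s hs x hx hsx h1
    by_contra! hcon
    obtain ⟨i, e⟩ := hC0 x hx s hs hsx.le
    have h2 := intervalIntegral.intervalIntegral_pos_of_pos_on i hcon hsx
    have h3 := hz1 s hs
    have h4 : 0 < 2 / lam := by positivity
    rw [h1] at e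
    nlinarith [norm_nonneg (z s)]
  -- main
  intro x hx y hy hxy
  have hx' := hU hx
  have hy' := hU hy
  set A : Set ℝ := {t | t ∈ Icc x y ∧ ‖z t‖ = 1} with hAdef
  have hg0 : 0 ≤ ∫ t in x..y, ‖g t‖ :=
    intervalIntegral.integral_nonneg hxy fun _ _ => norm_nonneg _
  by_cases hne : A.Nonempty
  swap
  · have : u x = u y := hA x hx' y hy' hxy fun t ht =>
      lt_of_le_of_ne (hz1 t (hsubI x hx' y hy' ht)) fun h => hne ⟨t, ht, h⟩
    rw [this]; simpa using hg0
  have hAc : IsCompact A := by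
    have hcl : IsClosed A := by
      have := (hzc.mono (hsubI x hx' y hy')).norm.preimage_isClosed_of_isClosed isClosed_Icc
        (isClosed_singleton (x := (1 : ℝ)))
      exact this
    exact isCompact_Icc.of_isClosed_subset hcl fun t ht => ht.1
  obtain ⟨p, hpA, hpmin⟩ := hAc.exists_isLeast hne
  obtain ⟨r, hrA, hrmax⟩ := hAc.exists_isGreatest hne
  have hpr : p ≤ r := hpmin hrA
  have hpU := hsubU x hx y hy hpA.1
  have hrU := hsubU x hx y hy hrA.1
  have hleft : ∀ t, x ≤ t → t < p → u x = u t := by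
    intro t h1 h2
    have htm : t ∈ Icc x y := ⟨h1, h2.le.trans hpA.1.2⟩
    refine hA x hx' t (hsubI x hx' y hy' htm) h1 fun s hs => ?_
    have hsm : s ∈ Icc x y := ⟨hs.1, hs.2.trans htm.2⟩
    refine lt_of_le_of_ne (hz1 s (hsubI x hx' y hy' hsm)) fun h => ?_
    have := hpmin (show s ∈ A from ⟨hsm, h⟩)
    linarith [hs.2]
  have hright : ∀ t, t ≤ y → r < t → u t = u y := by
    intro t h1 h2
    have htm : t ∈ Icc x y := ⟨hrA.1.1.trans h2.le, h1⟩
    refine hA t (hsubI x hx' y hy' htm) y hy' h1 fun s hs => ?_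
    have hsm : s ∈ Icc x y := ⟨htm.1.trans hs.1, hs.2⟩
    refine lt_of_le_of_ne (hz1 s (hsubI x hx' y hy' hsm)) fun h => ?_
    have := hrmax (show s ∈ A from ⟨hsm, h⟩)
    linarith [hs.1]
  have hmain : ∀ s ∈ Ioo c d, ∀ s' ∈ Ioo c d, s < x → y < s' →
      ‖u y - u x‖ ≤ ∫ t in s..s', ‖g t‖ := by
    intro s hs s' hs' hsx hys
    obtain ⟨t, ht, hφ⟩ := hCl s (hU hs) p (hU hpU) (hsx.trans_le hpA.1.1) hpA.2
    obtain ⟨t', ht', hφ'⟩ := hCr s' (hU hs') r (hU hrU) (lt_of_le_of_lt hrA.1.2 hys) hrA.2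
    have htt : t ≤ t' := ht.2.le.trans (hpr.trans ht'.1.le)
    have htU : t ∈ Ioo c d := ⟨hs.1.trans ht.1, ht.2.trans hpU.2⟩
    have htU' : t' ∈ Ioo c d := ⟨hrU.1.trans ht'.1, ht'.2.trans hs'.2⟩
    have h1 := hB t htU t' htU' htt
    have e1 : u x = u (max x t) := by
      rcases le_total x t with h | h
      · rw [max_eq_right h]; exact hleft t h ht.2
      · rw [max_eq_left h]
    have e2 : u y = u (min y t') := by
      rcases le_total y t' with h | h
      · rw [min_eq_left h]
      · rw [min_eq_right h]; exact (hright t' h ht'.1).symm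
    have h2 := hT t (hU htU) t' (hU htU') (min y t')
      ⟨le_min (ht.2.le.trans hpA.1.2) htt, min_le_right _ _⟩ (max x t)
      ⟨le_max_right _ _, max_le (hrA.1.1.trans ht'.1.le) htt⟩
    rw [← e1, ← e2] at h2
    have h3 : ∫ t in t..t', ‖g t‖ ≤ ∫ t in s..s', ‖g t‖ :=
      intervalIntegral.integral_mono_interval ht.1.le htt ht'.2.le
        (Eventually.of_forall fun _ => norm_nonneg _) (hgi s hs s' hs').norm
    linarith
  -- limit
  obtain ⟨x1, hx1, hx1x⟩ := exists_between hx.1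
  obtain ⟨y1, hyy1, hy1⟩ := exists_between hy.2
  have hx1U : x1 ∈ Ioo c d := ⟨hx1, hx1x.trans hx.2⟩
  have hy1U : y1 ∈ Ioo c d := ⟨hy.1.trans hyy1, hy1⟩
  have hx1y1 : x1 ≤ y1 := (hx1x.trans_le (hxy.trans hyy1.le)).le
  have hN : ContinuousOn (fun t => ∫ r in x1..t, ‖g r‖) (Icc x1 y1) := by
    have := ((hgi x1 hx1U y1 hy1U).norm.absolutelyContinuousOnInterval_intervalIntegral
      (c := x1) (by simp)).continuousOn
    rwa [uIcc_of_le hx1y1] at this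
  have cx : ContinuousAt (fun t => ∫ r in x1..t, ‖g r‖) x :=
    hN.continuousAt (Icc_mem_nhds hx1x (lt_of_le_of_lt hxy hyy1))
  have cy : ContinuousAt (fun t => ∫ r in x1..t, ‖g r‖) y :=
    hN.continuousAt (Icc_mem_nhds (hx1x.trans_le hxy) hyy1)
  have tx : Tendsto (fun ε : ℝ => ∫ r in x1..(x - ε), ‖g r‖) (nhdsWithin 0 (Ioi 0))
      (nhds (∫ r in x1..x, ‖g r‖)) := by
    refine Tendsto.comp cx ?_
    have : Tendsto (fun ε : ℝ => x - ε) (nhds 0) (nhds (x - 0)) := by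
      exact (continuous_const.sub continuous_id).tendsto _
    rw [sub_zero] at this
    exact this.mono_left nhdsWithin_le_nhds
  have ty : Tendsto (fun ε : ℝ => ∫ r in x1..(y + ε), ‖g r‖) (nhdsWithin 0 (Ioi 0))
      (nhds (∫ r in x1..y, ‖g r‖)) := by
    refine Tendsto.comp cy ?_
    have : Tendsto (fun ε : ℝ => y + ε) (nhds 0) (nhds (y + 0)) := by
      exact (continuous_const.add continuous_id).tendsto _
    rw [add_zero] at this
    exact this.mono_left nhdsWithin_le_nhds
  have ht := ty.sub tx
  rw [intervalIntegral.integral_interval_sub_left (hgi x1 hx1U y hy).norm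
    (hgi x1 hx1U x hx).norm] at ht
  refine ge_of_tendsto ht ?_
  have ev : ∀ᶠ ε : ℝ in nhdsWithin 0 (Ioi 0), ε < min (x - c) (d - y) :=
    nhdsWithin_le_nhds (gt_mem_nhds (lt_min (sub_pos.2 hx.1) (sub_pos.2 hy.2)))
  filter_upwards [ev, self_mem_nhdsWithin] with ε h1 h2
  have h2' : 0 < ε := h2
  have h3 := lt_min_iff.1 h1
  have m1 : x - ε ∈ Ioo c d := ⟨by linarith, by linarith [hx.2]⟩
  have m2 : y + ε ∈ Ioo c d := ⟨by linarith [hy.1], by linarith⟩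
  rw [intervalIntegral.integral_interval_sub_left (hgi x1 hx1U _ m2).norm (hgi x1 hx1U _ m1).norm]
  exact hmain _ m1 _ m2 (by linarith) (by linarith)

end RofAux

theorem rofaux_evar_affine {E : Type*} [NormedAddCommGroup E] [NormedSpace ℝ E] (u w : ℝ → E)
    (S : Set ℝ) (s : ℝ) (hs : 0 ≤ s) (c : E) (h : ∀ r ∈ S, w r = s • u r + c) :
    eVariationOn w S ≤ ENNReal.ofReal s * eVariationOn u S := by
  have hl : LipschitzWith s.toNNReal (fun e : E => s • e + c) := by
    refine LipschitzWith.of_dist_le_mul fun p q => ?_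
    rw [dist_add_right, dist_smul₀, Real.coe_toNNReal s hs, Real.norm_of_nonneg hs]
  rw [eVariationOn.congr (g := (fun e : E => s • e + c) ∘ u) h]
  exact (hl.lipschitzOnWith (s := univ)).comp_eVariationOn_le (mapsTo_univ _ _)

theorem rofaux_evar_add {E : Type*} [NormedAddCommGroup E] (u w : ℝ → E) (S : Set ℝ) :
    eVariationOn (fun r => u r + w r) S ≤ eVariationOn u S + eVariationOn w S := by
  refine iSup_le ?_
  rintro ⟨n, ⟨p, hp, ps⟩⟩
  refine (Finset.sum_le_sum fun i _ => edist_add_add_le _ _ _ _).trans ?_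
  rw [Finset.sum_add_distrib]
  exact add_le_add (eVariationOn.sum_le hp ps) (eVariationOn.sum_le hp ps)

theorem rofaux_evar_step {E : Type*} [NormedAddCommGroup E] [NormedSpace ℝ E] (a b x : ℝ)
    (e : E) :
    eVariationOn ((Ioi x).indicator (fun _ => e)) (Ioo a b) ≤ ENNReal.ofReal ‖e‖ := by
  set st : ℝ → ℝ := (Ioi x).indicator (fun _ => (1 : ℝ)) with hst
  have hmono : Monotone st := by
    intro p q hpq
    simp only [hst, indicator_apply, mem_Ioi]
    split_ifs <;> first | linarith | norm_num
  have hle1 : ∀ p, st p ≤ 1 := by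
    intro p; simp only [hst, indicator_apply]; split_ifs <;> norm_num
  have hge0 : ∀ p, 0 ≤ st p := by
    intro p; simp only [hst, indicator_apply]; split_ifs <;> norm_num
  have h1 : eVariationOn st (Ioo a b) ≤ 1 := by
    refine (eVariationOn.mono st (s := univ ∩ Icc a b)
      (fun t ht => ⟨mem_univ _, Ioo_subset_Icc_self ht⟩)).trans ?_
    rw [(hmono.monotoneOn univ).eVariationOn_eq (mem_univ a) (mem_univ b)]
    rw [← ENNReal.ofReal_one]
    exact ENNReal.ofReal_le_ofReal (by linarith [hle1 b, hge0 a])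
  have hl : LipschitzWith ‖e‖.toNNReal (fun r : ℝ => r • e) := by
    refine LipschitzWith.of_dist_le_mul fun p q => ?_
    rw [Real.coe_toNNReal _ (norm_nonneg _), dist_eq_norm, ← sub_smul, norm_smul, mul_comm,
      dist_eq_norm]
  have heq : (Ioi x).indicator (fun _ => e) = (fun r : ℝ => r • e) ∘ st := by
    funext t
    by_cases h : t ∈ Ioi x <;> simp [hst, h]
  rw [heq]
  refine ((hl.lipschitzOnWith (s := univ)).comp_eVariationOn_le (mapsTo_univ _ _)).trans ?_
  calc _ ≤ (‖e‖.toNNReal : ℝ≥0∞) * 1 := by gcongr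
    _ = ENNReal.ofReal ‖e‖ := by rw [mul_one]; rfl

theorem rofaux_sq_memLp {n : ℕ} {w : ℝ → EuclideanSpace ℝ (Fin n)} {S : Set ℝ}
    (hm : Measurable w) : SqIntOn w S ↔ MemLp w 2 (volume.restrict S) :=
  (memLp_two_iff_integrable_sq_norm hm.aestronglyMeasurable).symm

theorem rofaux_bv {n : ℕ} {lam a b : ℝ} {f u : ℝ → EuclideanSpace ℝ (Fin n)}
    (hu : IsMinimizer lam a b f u) : BoundedVariationOn u (Ioo a b) := by
  have h := hu.2.2 (fun _ => 0) measurable_const (by simp [SqIntOn])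
  have h0 : eVariationOn (fun _ : ℝ => (0 : EuclideanSpace ℝ (Fin n))) (Ioo a b) = 0 :=
    eVariationOn.constant_on (by
      rintro _ ⟨_, _, rfl⟩ _ ⟨_, _, rfl⟩; rfl)
  have : rofEnergy lam a b f (fun _ => 0) < ⊤ := by
    unfold rofEnergy
    rw [h0, zero_add]; exact ENNReal.ofReal_lt_top
  have h2 := h.trans_lt this
  unfold rofEnergy at h2
  exact (lt_of_le_of_lt le_self_add h2).ne

theorem rofaux_var {n : ℕ} {lam a b : ℝ} (hlam : 0 < lam) {f u : ℝ → EuclideanSpace ℝ (Fin n)}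
    (hf : Measurable f) (hf2 : SqIntOn f (Ioo a b)) (hu : IsMinimizer lam a b f u)
    {v : ℝ → EuclideanSpace ℝ (Fin n)} (hv : Measurable v) (hv2 : SqIntOn v (Ioo a b)) {M : ℝ}
    (hM : ∀ t : ℝ, 0 < t → t < 1 → eVariationOn (fun r => u r + t • v r) (Ioo a b) ≠ ⊤ ∧
      (eVariationOn (fun r => u r + t • v r) (Ioo a b)).toReal
        ≤ (eVariationOn u (Ioo a b)).toReal + t * M) :
    0 ≤ (∫ r in Ioo a b, inner ℝ (v r) (lam⁻¹ • (u r - f r))) + M := by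
  have hbv := rofaux_bv hu
  obtain ⟨hum, hu2, hmin⟩ := hu
  have Lu := (rofaux_sq_memLp hum).1 hu2
  have Lf := (rofaux_sq_memLp hf).1 hf2
  have Lv := (rofaux_sq_memLp hv).1 hv2
  have Lq := Lu.sub Lf
  have iq : IntegrableOn (fun r => ‖u r - f r‖ ^ 2) (Ioo a b) :=
    (memLp_two_iff_integrable_sq_norm Lq.1).1 Lq
  have iv : IntegrableOn (fun r => ‖v r‖ ^ 2) (Ioo a b) := hv2
  have ii : IntegrableOn (fun r => inner ℝ (v r) (u r - f r)) (Ioo a b) := by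
    refine Integrable.mono' (iv.add iq) (Lv.1.inner Lq.1) (Eventually.of_forall fun r => ?_)
    refine (norm_inner_le_norm _ _).trans ?_
    simp only [Pi.add_apply]
    nlinarith [sq_nonneg (‖v r‖ - ‖u r - f r‖), sq_nonneg (‖v r‖), sq_nonneg (‖u r - f r‖)]
  set A := ∫ r in Ioo a b, ‖u r - f r‖ ^ 2 with hA
  set B := ∫ r in Ioo a b, inner ℝ (v r) (u r - f r) with hB
  set C := ∫ r in Ioo a b, ‖v r‖ ^ 2 with hC
  have hBe : ∫ r in Ioo a b, inner ℝ (v r) (lam⁻¹ • (u r - f r)) = lam⁻¹ * B := by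
    simp only [real_inner_smul_right]
    rw [integral_const_mul]
  rw [hBe]
  have key : ∀ t : ℝ, 0 < t → t < 1 → 0 ≤ lam⁻¹ * B + M + t * (C * (1 / (2 * lam))) := by
    intro t ht0 ht1
    obtain ⟨hfin, hle⟩ := hM t ht0 ht1
    have hmw : Measurable (fun r => u r + t • v r) := hum.add (hv.const_smul t)
    have h := hmin _ hmw ((rofaux_sq_memLp hmw).2 (Lu.add (Lv.const_smul t)))
    unfold rofEnergy at h
    have hexp : ∫ r in Ioo a b, ‖u r + t • v r - f r‖ ^ 2 = A + 2 * t * B + t ^ 2 * C := by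
      have : ∀ r, ‖u r + t • v r - f r‖ ^ 2
          = ‖u r - f r‖ ^ 2 + 2 * t * inner ℝ (v r) (u r - f r) + t ^ 2 * ‖v r‖ ^ 2 := by
        intro r
        have e : u r + t • v r - f r = (u r - f r) + t • v r := by abel
        rw [e, norm_add_sq_real, real_inner_smul_right, norm_smul, mul_pow, Real.norm_eq_abs,
          sq_abs, real_inner_comm]
        ring
      simp only [this]
      have i12 : IntegrableOn (fun r => ‖u r - f r‖ ^ 2 + 2 * t * inner ℝ (v r) (u r - f r))
          (Ioo a b) := iq.add (ii.const_mul (2 * t))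
      rw [integral_add i12 (iv.const_mul (t ^ 2)),
        integral_add iq (ii.const_mul (2 * t)), integral_const_mul, integral_const_mul]
    have hA0 : 0 ≤ 1 / (2 * lam) * A := by
      have : 0 ≤ A := integral_nonneg fun r => by positivity
      positivity
    have hA1 : 0 ≤ 1 / (2 * lam) * ∫ r in Ioo a b, ‖u r + t • v r - f r‖ ^ 2 := by
      have : 0 ≤ ∫ r in Ioo a b, ‖u r + t • v r - f r‖ ^ 2 :=
        integral_nonneg fun r => by positivity
      positivity
    have h' := ENNReal.toReal_mono (ENNReal.add_ne_top.2 ⟨hfin, ENNReal.ofReal_ne_top⟩) h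
    rw [ENNReal.toReal_add hbv ENNReal.ofReal_ne_top, ENNReal.toReal_add hfin ENNReal.ofReal_ne_top,
      ENNReal.toReal_ofReal hA0, ENNReal.toReal_ofReal hA1, hexp] at h'
    have h3 : 0 ≤ t * (lam⁻¹ * B + M + t * (C * (1 / (2 * lam)))) := by
      have e : t * (lam⁻¹ * B + M + t * (C * (1 / (2 * lam)))) =
        t * M + 1 / (2 * lam) * (A + 2 * t * B + t ^ 2 * C) - 1 / (2 * lam) * A := by
        field_simp; ring
      rw [e]; linarith
    exact nonneg_of_mul_nonneg_right h3 ht0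
  have hlim : Tendsto (fun t : ℝ => lam⁻¹ * B + M + t * (C * (1 / (2 * lam))))
      (nhdsWithin 0 (Ioi 0)) (nhds (lam⁻¹ * B + M + 0 * (C * (1 / (2 * lam))))) := by
    refine Tendsto.mono_left (Continuous.tendsto ?_ 0) nhdsWithin_le_nhds
    fun_prop
  rw [zero_mul, add_zero] at hlim
  refine ge_of_tendsto hlim ?_
  filter_upwards [self_mem_nhdsWithin, nhdsWithin_le_nhds (Iio_mem_nhds (zero_lt_one))] with t h1 h2
  exact key t h1 h2

section RofAux2

variable {n : ℕ} {lam a b : ℝ} {f u : ℝ → EuclideanSpace ℝ (Fin n)}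

theorem rofaux_k_int (hf : Measurable f) (hf2 : SqIntOn f (Ioo a b))
    (hu : IsMinimizer lam a b f u) (hab : a < b) :
    IntervalIntegrable (fun t => lam⁻¹ • (u t - f t)) volume a b := by
  have Lu := (rofaux_sq_memLp hu.1).1 hu.2.1
  have Lf := (rofaux_sq_memLp hf).1 hf2
  have Lq := (Lu.sub Lf).integrable (by norm_num)
  rw [intervalIntegrable_iff_integrableOn_Ioo_of_le hab.le]
  exact Lq.smul lam⁻¹

theorem rofaux_k_zero (hlam : 0 < lam) (hf : Measurable f) (hf2 : SqIntOn f (Ioo a b))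
    (hu : IsMinimizer lam a b f u) (hab : a < b) :
    ∫ t in a..b, lam⁻¹ • (u t - f t) = 0 := by
  have hki := rofaux_k_int hf hf2 hu hab
  set Z := ∫ t in a..b, lam⁻¹ • (u t - f t) with hZ
  have h := rofaux_var hlam hf hf2 hu (v := fun _ => -Z) measurable_const
    (by simp [SqIntOn]) (M := 0) (by
      intro t _ _
      have h1 := rofaux_evar_affine u (fun r => u r + t • -Z) (Ioo a b) 1 zero_le_one (t • -Z)
        (fun r _ => by rw [one_smul])
      rw [ENNReal.ofReal_one, one_mul] at h1
      have hb := rofaux_bv hu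
      refine ⟨(lt_of_le_of_lt h1 (lt_top_iff_ne_top.2 hb)).ne, ?_⟩
      rw [mul_zero, add_zero]
      exact ENNReal.toReal_mono hb h1)
  rw [intervalIntegrable_iff_integrableOn_Ioo_of_le hab.le] at hki
  rw [add_zero, integral_inner hki, ← integral_Ioc_eq_integral_Ioo,
    ← intervalIntegral.integral_of_le hab.le, ← hZ, inner_neg_left,
    real_inner_self_eq_norm_sq] at h
  have : ‖Z‖ ^ 2 = 0 := le_antisymm (by linarith) (sq_nonneg _)
  exact norm_eq_zero.1 (pow_eq_zero_iff (two_ne_zero) |>.1 this)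

theorem rofaux_z_le (hlam : 0 < lam) (hf : Measurable f) (hf2 : SqIntOn f (Ioo a b))
    (hu : IsMinimizer lam a b f u) (hab : a < b) (x : ℝ) (hx : x ∈ Ioo a b) :
    ‖∫ t in a..x, lam⁻¹ • (u t - f t)‖ ≤ 1 := by
  have hki := rofaux_k_int hf hf2 hu hab
  have hk0 := rofaux_k_zero hlam hf hf2 hu hab
  have hbv := rofaux_bv hu
  have hk1 : IntervalIntegrable (fun t => lam⁻¹ • (u t - f t)) volume a x :=
    hki.mono_set (by rw [uIcc_of_le hx.1.le, uIcc_of_le hab.le]; exact Icc_subset_Icc_right hx.2.le)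
  have hk2 : IntervalIntegrable (fun t => lam⁻¹ • (u t - f t)) volume x b :=
    hki.mono_set (by rw [uIcc_of_le hx.2.le, uIcc_of_le hab.le]; exact Icc_subset_Icc_left hx.1.le)
  rw [← intervalIntegral.integral_add_adjacent_intervals hk1 hk2] at hk0
  set Z := ∫ t in a..x, lam⁻¹ • (u t - f t) with hZ
  have hvm : Measurable ((Ioi x).indicator (fun _ : ℝ => Z)) :=
    measurable_const.indicator measurableSet_Ioi
  have hv2 : SqIntOn ((Ioi x).indicator (fun _ : ℝ => Z)) (Ioo a b) := by
    refine (rofaux_sq_memLp hvm).2 ?_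
    exact MemLp.indicator measurableSet_Ioi (memLp_const _)
  have h := rofaux_var hlam hf hf2 hu hvm hv2 (M := ‖Z‖) (by
      intro t ht0 _
      have h1 := rofaux_evar_add u (fun r => t • (Ioi x).indicator (fun _ : ℝ => Z) r) (Ioo a b)
      have h2 := rofaux_evar_affine ((Ioi x).indicator (fun _ : ℝ => Z))
        (fun r => t • (Ioi x).indicator (fun _ : ℝ => Z) r) (Ioo a b) t ht0.le 0
        (fun r _ => by rw [add_zero])
      have h3 := rofaux_evar_step a b x Z
      have h4 : eVariationOn (fun r => u r + t • (Ioi x).indicator (fun _ : ℝ => Z) r) (Ioo a b)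
          ≤ eVariationOn u (Ioo a b) + ENNReal.ofReal (t * ‖Z‖) := by
        refine h1.trans (add_le_add le_rfl (h2.trans ?_))
        rw [ENNReal.ofReal_mul ht0.le]
        gcongr
      have hfin : eVariationOn u (Ioo a b) + ENNReal.ofReal (t * ‖Z‖) ≠ ⊤ :=
        ENNReal.add_ne_top.2 ⟨hbv, ENNReal.ofReal_ne_top⟩
      refine ⟨(lt_of_le_of_lt h4 (lt_top_iff_ne_top.2 hfin)).ne, ?_⟩
      have h5 := ENNReal.toReal_mono hfin h4
      rwa [ENNReal.toReal_add hbv ENNReal.ofReal_ne_top,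
        ENNReal.toReal_ofReal (by positivity)] at h5)
  have e1 : ∀ r, inner ℝ ((Ioi x).indicator (fun _ : ℝ => Z) r) (lam⁻¹ • (u r - f r))
      = (Ioi x).indicator (fun r => inner ℝ Z (lam⁻¹ • (u r - f r))) r := by
    intro r
    by_cases hr : r ∈ Ioi x
    · rw [indicator_of_mem hr, indicator_of_mem hr]
    · rw [indicator_of_notMem hr, indicator_of_notMem hr, inner_zero_left]
  have e2 : Ioo a b ∩ Ioi x = Ioo x b := by
    ext r; simp only [mem_inter_iff, mem_Ioo, mem_Ioi]
    exact ⟨fun h => ⟨h.2, h.1.2⟩, fun h => ⟨⟨hx.1.trans h.1, h.2⟩, h.1⟩⟩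
  simp only [e1] at h
  rw [intervalIntegrable_iff_integrableOn_Ioo_of_le hx.2.le] at hk2
  rw [setIntegral_indicator measurableSet_Ioi, e2, integral_inner hk2,
    ← integral_Ioc_eq_integral_Ioo, ← intervalIntegral.integral_of_le hx.2.le,
    eq_neg_of_add_eq_zero_right hk0, inner_neg_right, real_inner_self_eq_norm_sq] at h
  by_contra! hcon
  nlinarith

theorem rofaux_K (hlam : 0 < lam) (hf : Measurable f) (hf2 : SqIntOn f (Ioo a b))
    (hu : IsMinimizer lam a b f u) (hab : a < b) (x : ℝ) (hx : x ∈ Ioo a b)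
    (y : ℝ) (hy : y ∈ Ioo a b) (hxy : x ≤ y) :
    (eVariationOn u (Icc x y)).toReal ≤
      -(∫ t in x..y, inner ℝ (lam⁻¹ • (u t - f t)) (u t - u x))
        + inner ℝ (∫ t in a..y, lam⁻¹ • (u t - f t)) (u y - u x) := by
  have hki := rofaux_k_int hf hf2 hu hab
  have hk0 := rofaux_k_zero hlam hf hf2 hu hab
  have hbv := rofaux_bv hu
  have hsub : Icc x y ⊆ Ioo a b := ordConnected_Ioo.out hx hy
  have hbvxy := hbv.mono hsub
  have hk1 : ∀ s ∈ Icc a b, ∀ t ∈ Icc a b,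
      IntervalIntegrable (fun t => lam⁻¹ • (u t - f t)) volume s t := fun s hs t ht =>
    hki.mono_set (by rw [uIcc_of_le hab.le]; exact ordConnected_Icc.uIcc_subset hs ht)
  have ma : a ∈ Icc a b := ⟨le_rfl, hab.le⟩
  have mb : b ∈ Icc a b := ⟨hab.le, le_rfl⟩
  have mx := Ioo_subset_Icc_self hx
  have my := Ioo_subset_Icc_self hy
  rw [← intervalIntegral.integral_add_adjacent_intervals (hk1 a ma y my) (hk1 y my b mb)] at hk0
  set T := (eVariationOn u (Icc x y)).toReal with hT
  set v : ℝ → EuclideanSpace ℝ (Fin n) := fun t => u x - u (max x (min y t)) with hv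
  have hcl : ∀ t, max x (min y t) ∈ Icc x y := fun t =>
    ⟨le_max_left _ _, max_le hxy (min_le_left _ _)⟩
  have v1 : ∀ t, t ≤ x → v t = 0 := by
    intro t ht
    simp only [hv]
    rw [min_eq_right (ht.trans hxy), max_eq_left ht, sub_self]
  have v2 : ∀ t ∈ Icc x y, v t = u x - u t := by
    intro t ht
    simp only [hv]
    rw [min_eq_right ht.2, max_eq_right ht.1]
  have v3 : ∀ t, y ≤ t → v t = u x - u y := by
    intro t ht
    simp only [hv]
    rw [min_eq_left ht, max_eq_right hxy]
  have hvm : Measurable v :=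
    (hu.1.comp (measurable_const.max (measurable_const.min measurable_id))).const_sub _
  have hvb : ∀ t, ‖v t‖ ≤ T := by
    intro t
    simp only [hv]
    rw [← dist_eq_norm]
    exact hbvxy.dist_le ⟨le_rfl, hxy⟩ (hcl t)
  have hv2 : SqIntOn v (Ioo a b) := by
    refine (rofaux_sq_memLp hvm).2 ?_
    exact MemLp.of_bound hvm.aestronglyMeasurable T (Eventually.of_forall hvb)
  -- decomposition of variation
  have hdec : ∀ w : ℝ → EuclideanSpace ℝ (Fin n), eVariationOn w (Ioo a b)
      = eVariationOn w (Ioc a x) + eVariationOn w (Icc x y) + eVariationOn w (Ico y b) := by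
    intro w
    have g1 : IsGreatest (Ioc a x) x := ⟨⟨hx.1, le_rfl⟩, fun t ht => ht.2⟩
    have l1 : IsLeast (Icc x y) x := ⟨⟨le_rfl, hxy⟩, fun t ht => ht.1⟩
    have g2 : IsGreatest (Ioc a y) y := ⟨⟨hy.1, le_rfl⟩, fun t ht => ht.2⟩
    have l2 : IsLeast (Ico y b) y := ⟨⟨le_rfl, hy.2⟩, fun t ht => ht.1⟩
    rw [← eVariationOn.union w g1 l1, Ioc_union_Icc_eq_Ioc hx.1 hxy,
      ← eVariationOn.union w g2 l2, Ioc_union_Ico_eq_Ioo hy.1 hy.2]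
  have b1 : eVariationOn u (Ioc a x) ≠ ⊤ :=
    hbv.mono (fun t ht => ⟨ht.1, lt_of_le_of_lt ht.2 hx.2⟩)
  have b3 : eVariationOn u (Ico y b) ≠ ⊤ :=
    hbv.mono (fun t ht => ⟨lt_of_lt_of_le hy.1 ht.1, ht.2⟩)
  have h := rofaux_var hlam hf hf2 hu hvm hv2 (M := -T) (by
      intro t ht0 ht1
      have w1 := rofaux_evar_affine u (fun r => u r + t • v r) (Ioc a x) 1 zero_le_one 0
        (fun r hr => by simp [v1 r hr.2])
      have w2 := rofaux_evar_affine u (fun r => u r + t • v r) (Icc x y) (1 - t)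
        (by linarith) (t • u x) (fun r hr => by
          simp only [v2 r hr, smul_sub, sub_smul, one_smul]; abel)
      have w3 := rofaux_evar_affine u (fun r => u r + t • v r) (Ico y b) 1 zero_le_one
        (t • (u x - u y)) (fun r hr => by simp [v3 r hr.1])
      rw [ENNReal.ofReal_one, one_mul] at w1 w3
      have w4 : eVariationOn (fun r => u r + t • v r) (Ioo a b) ≤ eVariationOn u (Ioc a x)
          + ENNReal.ofReal (1 - t) * eVariationOn u (Icc x y) + eVariationOn u (Ico y b) := by
        rw [hdec]; gcongr
      have b2 : ENNReal.ofReal (1 - t) * eVariationOn u (Icc x y) ≠ ⊤ :=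
        ENNReal.mul_ne_top ENNReal.ofReal_ne_top hbvxy
      have b12 := ENNReal.add_ne_top.2 ⟨b1, b2⟩
      have b123 := ENNReal.add_ne_top.2 ⟨b12, b3⟩
      refine ⟨(lt_of_le_of_lt w4 (lt_top_iff_ne_top.2 b123)).ne, ?_⟩
      refine (ENNReal.toReal_mono b123 w4).trans ?_
      rw [hdec u, ENNReal.toReal_add b12 b3, ENNReal.toReal_add b1 b2, ENNReal.toReal_mul,
        ENNReal.toReal_ofReal (by linarith : 0 ≤ 1 - t),
        ENNReal.toReal_add (ENNReal.add_ne_top.2 ⟨b1, hbvxy⟩) b3, ENNReal.toReal_add b1 hbvxy,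
        ← hT]
      apply le_of_eq; ring)
  have hint : ∀ s ∈ Icc a b, ∀ t ∈ Icc a b, s ≤ t →
      IntervalIntegrable (fun r => inner ℝ (lam⁻¹ • (u r - f r)) (v r)) volume s t :=
    fun s hs t ht hst => rofaux_int_inner hst (hk1 s hs t ht) hvm.aestronglyMeasurable
      (fun r _ => hvb r)
  have hcomm : ∀ r, inner ℝ (v r) (lam⁻¹ • (u r - f r)) = inner ℝ (lam⁻¹ • (u r - f r)) (v r) :=
    fun r => real_inner_comm _ _
  simp only [hcomm] at h
  rw [← integral_Ioc_eq_integral_Ioo, ← intervalIntegral.integral_of_le hab.le,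
    ← intervalIntegral.integral_add_adjacent_intervals (hint a ma y my my.1) (hint y my b mb my.2),
    ← intervalIntegral.integral_add_adjacent_intervals (hint a ma x mx mx.1) (hint x mx y my hxy)]
    at h
  have e1 : ∫ r in a..x, inner ℝ (lam⁻¹ • (u r - f r)) (v r) = 0 := by
    rw [intervalIntegral.integral_congr (g := fun _ => (0 : ℝ)), intervalIntegral.integral_zero]
    intro r hr
    rw [uIcc_of_le mx.1] at hr
    simp only [v1 r hr.2, inner_zero_right]
  have e2 : ∫ r in x..y, inner ℝ (lam⁻¹ • (u r - f r)) (v r)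
      = -∫ r in x..y, inner ℝ (lam⁻¹ • (u r - f r)) (u r - u x) := by
    rw [← intervalIntegral.integral_neg]
    refine intervalIntegral.integral_congr ?_
    intro r hr
    rw [uIcc_of_le hxy] at hr
    simp only [v2 r hr]
    rw [← inner_neg_right, neg_sub]
  have e3 : ∫ r in y..b, inner ℝ (lam⁻¹ • (u r - f r)) (v r)
      = inner ℝ (∫ t in a..y, lam⁻¹ • (u t - f t)) (u y - u x) := by
    rw [intervalIntegral.integral_congr (g := fun r => inner ℝ (u x - u y) (lam⁻¹ • (u r - f r)))]
    · have i := hk1 y my b mb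
      rw [intervalIntegral.integral_of_le my.2,
        integral_inner ((intervalIntegrable_iff_integrableOn_Ioc_of_le my.2).1 i),
        ← intervalIntegral.integral_of_le my.2, eq_neg_of_add_eq_zero_right hk0, inner_neg_right,
        real_inner_comm, ← inner_neg_right, neg_sub]
    · intro r hr
      rw [uIcc_of_le my.2] at hr
      simp only [v3 r hr.1]
      exact real_inner_comm _ _
  rw [e1, e2, e3] at h
  linarith

end RofAux2

/-- if the datum `f` is absolutely continuous on an open subinterval
`U = Ioo c d` with density `g` satisfying `∫_U ‖g‖^p < ∞`, then the ROF minimizer has a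
representative which is absolutely continuous on `U` with density `h` satisfying
`‖h‖ ≤ ‖g‖` a.e. on `U`; in particular `∫_U ‖h‖^p ≤ ∫_U ‖g‖^p`. -/
theorem minimizer_absolutely_continuous_of_datum_absolutely_continuous
    {n : ℕ} (hn : 1 ≤ n) (a b : ℝ) (hab : a < b) (lam : ℝ) (hlam : 0 < lam)
    (f : ℝ → EuclideanSpace ℝ (Fin n)) (hf_meas : Measurable f)
    (hf_sq : SqIntOn f (Set.Ioo a b))
    (u : ℝ → EuclideanSpace ℝ (Fin n)) (hu : IsMinimizer lam a b f u)
    (c d : ℝ) (hU : Set.Ioo c d ⊆ Set.Ioo a b)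
    (p : ℝ) (hp : 1 ≤ p)
    (g : ℝ → EuclideanSpace ℝ (Fin n))
    (hg_loc : MeasureTheory.LocallyIntegrableOn g (Set.Ioo c d))
    (hfg : ∀ x ∈ Set.Ioo c d, ∀ y ∈ Set.Ioo c d, f y - f x = ∫ t in x..y, g t)
    (hgp : MeasureTheory.IntegrableOn (fun x => ‖g x‖ ^ p) (Set.Ioo c d)) :
    ∃ ubar h : ℝ → EuclideanSpace ℝ (Fin n),
      (∀ᵐ x ∂(MeasureTheory.volume.restrict (Set.Ioo a b)), ubar x = u x) ∧
      MeasureTheory.LocallyIntegrableOn h (Set.Ioo c d) ∧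
      (∀ x ∈ Set.Ioo c d, ∀ y ∈ Set.Ioo c d, ubar y - ubar x = ∫ t in x..y, h t) ∧
      (∀ᵐ x ∂(MeasureTheory.volume.restrict (Set.Ioo c d)), ‖h x‖ ≤ ‖g x‖) ∧
      (∫ x in Set.Ioo c d, ‖h x‖ ^ p) ≤ ∫ x in Set.Ioo c d, ‖g x‖ ^ p := by
  have hki := rofaux_k_int hf_meas hf_sq hu hab
  have hk1 : ∀ s ∈ Icc a b, ∀ t ∈ Icc a b,
      IntervalIntegrable (fun t => lam⁻¹ • (u t - f t)) volume s t := fun s hs t ht =>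
    hki.mono_set (by rw [uIcc_of_le hab.le]; exact ordConnected_Icc.uIcc_subset hs ht)
  have ma : a ∈ Icc a b := ⟨le_rfl, hab.le⟩
  have hb := rofaux_core (k := fun t => lam⁻¹ • (u t - f t))
    (z := fun x => ∫ t in a..x, lam⁻¹ • (u t - f t)) hlam hf_meas hu.1
    (fun t => by rw [smul_inv_smul₀ hlam.ne'])
    (fun x hx y hy => hk1 x (Ioo_subset_Icc_self hx) y (Ioo_subset_Icc_self hy))
    (fun x hx y hy => intervalIntegral.integral_interval_sub_left
      (hk1 a ma y (Ioo_subset_Icc_self hy)) (hk1 a ma x (Ioo_subset_Icc_self hx)))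
    (rofaux_z_le hlam hf_meas hf_sq hu hab) (rofaux_bv hu)
    (rofaux_K hlam hf_meas hf_sq hu hab) hU hg_loc hfg
  obtain ⟨h, h1, h2, h3⟩ := rofaux_final hg_loc hb
  refine ⟨u, h, Eventually.of_forall fun _ => rfl, h1, h2, h3, ?_⟩
  refine integral_mono_of_nonneg (Eventually.of_forall fun x => by positivity) hgp ?_
  filter_upwards [h3] with x hx
  exact Real.rpow_le_rpow (norm_nonneg _) hx (by linarith)
end
end

section
/- For every ε > 0 the regularized energy E_ε admits a minimizer over H¹(I,ℝⁿ), and it is unique up to equality almost everywhere on I: if u₁ and u₂ both minimize E_ε over H¹(I,ℝⁿ), then u₁ = u₂ on [a,b]. -/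
open MeasureTheory Set Filter
open scoped ENNReal

noncomputable section

/-- `w` belongs to `H¹(I, ℝⁿ)` with (weak) derivative `w'`: it is continuous on `[a,b]`,
`w'` is square-integrable on `I = Ioo a b`, and the fundamental theorem of calculus holds. -/
def InH1 {n : ℕ} (a b : ℝ) (w w' : ℝ → EuclideanSpace ℝ (Fin n)) : Prop :=
  ContinuousOn w (Set.Icc a b) ∧
  MeasureTheory.IntegrableOn (fun x => ‖w' x‖ ^ 2) (Set.Ioo a b) ∧
  ∀ x ∈ Set.Icc a b, ∀ y ∈ Set.Icc a b, w y - w x = ∫ t in x..y, w' t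

/-- The regularized energy `E_ε` evaluated at `w ∈ H¹` with derivative `w'`. -/
def regEnergy {n : ℕ} (lam ε a b : ℝ) (f w w' : ℝ → EuclideanSpace ℝ (Fin n)) : ℝ :=
  ∫ x in Set.Ioo a b, ((1 / (2 * lam)) * ‖w x - f x‖ ^ 2
    + Real.sqrt (‖w' x‖ ^ 2 + ε ^ 2) + (ε ^ 2 / 2) * ‖w' x‖ ^ 2)

/-- `u` (with derivative `u'`) minimizes `E_ε` over `H¹(I, ℝⁿ)`. -/
def IsMinimizerEps {n : ℕ} (lam ε a b : ℝ) (f u u' : ℝ → EuclideanSpace ℝ (Fin n)) : Prop :=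
  InH1 a b u u' ∧ ∀ v v' : ℝ → EuclideanSpace ℝ (Fin n), InH1 a b v v' →
    regEnergy lam ε a b f u u' ≤ regEnergy lam ε a b f v v'

lemma aux_min {V : Type*} [NormedAddCommGroup V] [NormedSpace ℝ V] [CompleteSpace V]
    (F : V → ℝ) (hc : Continuous F) (h0 : ∀ v, 0 ≤ F v) (κ : ℝ) (hκ : 0 < κ)
    (hs : ∀ u v, F ((1/2 : ℝ) • (u + v)) ≤ (F u + F v) / 2 - κ * ‖u - v‖ ^ 2) :
    ∃ u, ∀ v, F u ≤ F v := by
  have hbdd : BddBelow (range F) := ⟨0, by rintro _ ⟨v, rfl⟩; exact h0 v⟩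
  set m := sInf (range F) with hm
  have hml : ∀ v, m ≤ F v := fun v => csInf_le hbdd ⟨v, rfl⟩
  obtain ⟨y, -, hy, hyr⟩ := exists_seq_tendsto_sInf (range_nonempty F) hbdd
  choose u hu using hyr
  have hFu : Tendsto (fun k => F (u k)) atTop (nhds m) := by simpa [hu] using hy
  have hcau : CauchySeq u := by
    rw [Metric.cauchySeq_iff']
    intro e he
    have hpos : 0 < κ * e ^ 2 := by positivity
    have := (hFu.eventually (gt_mem_nhds (show m < m + κ * e ^ 2 by linarith)))
    obtain ⟨N, hN⟩ := eventually_atTop.1 this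
    refine ⟨N, fun k hk => ?_⟩
    have h1 := hN k hk
    have h2 := hN N le_rfl
    have h3 := hs (u k) (u N)
    have h4 := hml ((1/2 : ℝ) • (u k + u N))
    have h5 : κ * ‖u k - u N‖ ^ 2 < κ * e ^ 2 := by linarith
    have h6 := lt_of_mul_lt_mul_left h5 hκ.le
    rw [dist_eq_norm]
    exact lt_of_pow_lt_pow_left₀ 2 he.le h6
  obtain ⟨w, hw⟩ := cauchySeq_tendsto_of_complete hcau
  have := tendsto_nhds_unique ((hc.tendsto w).comp hw) hFu
  exact ⟨w, fun v => this ▸ hml v⟩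

lemma aux_sqrt_mid {V : Type*} [NormedAddCommGroup V] [NormedSpace ℝ V] (ε : ℝ) (x y : V) :
    Real.sqrt (‖(1/2 : ℝ) • (x + y)‖ ^ 2 + ε ^ 2) ≤
      (Real.sqrt (‖x‖ ^ 2 + ε ^ 2) + Real.sqrt (‖y‖ ^ 2 + ε ^ 2)) / 2 := by
  have hn : ‖(1/2 : ℝ) • (x + y)‖ ≤ (‖x‖ + ‖y‖) / 2 := by
    rw [norm_smul]; have := norm_add_le x y; norm_num; linarith
  have h0 := norm_nonneg ((1/2 : ℝ) • (x + y))
  apply Real.sqrt_le_iff.2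
  refine ⟨by positivity, ?_⟩
  have a1 := Real.sq_sqrt (show 0 ≤ ‖x‖ ^ 2 + ε ^ 2 by positivity)
  have a2 := Real.sq_sqrt (show 0 ≤ ‖y‖ ^ 2 + ε ^ 2 by positivity)
  have a3 : ‖x‖ * ‖y‖ + ε ^ 2 ≤ Real.sqrt (‖x‖ ^ 2 + ε ^ 2) * Real.sqrt (‖y‖ ^ 2 + ε ^ 2) := by
    rw [← Real.sqrt_mul (by positivity)]
    apply Real.le_sqrt_of_sq_le
    nlinarith [mul_nonneg (sq_nonneg (‖x‖ - ‖y‖)) (sq_nonneg ε)]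
  have h4 := pow_le_pow_left₀ h0 hn 2
  nlinarith

lemma aux_sqrt_lip (ε s t : ℝ) (hε : 0 < ε) :
    |Real.sqrt (s ^ 2 + ε ^ 2) - Real.sqrt (t ^ 2 + ε ^ 2)| ≤ |s - t| := by
  wlog h : Real.sqrt (t ^ 2 + ε ^ 2) ≤ Real.sqrt (s ^ 2 + ε ^ 2) generalizing s t
  · rw [abs_sub_comm, abs_sub_comm s t]; exact this t s (le_of_not_ge h)
  rw [abs_of_nonneg (by linarith)]
  have : Real.sqrt (s ^ 2 + ε ^ 2) ≤ |s - t| + Real.sqrt (t ^ 2 + ε ^ 2) := by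
    apply Real.sqrt_le_iff.2
    refine ⟨by positivity, ?_⟩
    have a2 := Real.sq_sqrt (show 0 ≤ t ^ 2 + ε ^ 2 by positivity)
    have h1 : |t| ≤ Real.sqrt (t ^ 2 + ε ^ 2) := Real.abs_le_sqrt (by nlinarith)
    have h2 : (s - t) * t ≤ |s - t| * Real.sqrt (t ^ 2 + ε ^ 2) :=
      (le_abs_self _).trans (by rw [abs_mul]; gcongr)
    nlinarith [sq_abs (s - t)]
  linarith

abbrev Eu (n : ℕ) := EuclideanSpace ℝ (Fin n)
abbrev muI (a b : ℝ) : Measure ℝ := volume.restrict (Ioo a b)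
abbrev L2I (n : ℕ) (a b : ℝ) := Lp (Eu n) 2 (muI a b)

lemma aux_L2_sq {n : ℕ} {a b : ℝ} (g : L2I n a b) : ‖g‖ ^ 2 = ∫ x, ‖g x‖ ^ 2 ∂(muI a b) := by
  rw [← real_inner_self_eq_norm_sq, L2.inner_def]
  simp

lemma aux_int {n : ℕ} {a b : ℝ} (g : L2I n a b) : Integrable g (muI a b) :=
  (Lp.memLp g).integrable (by norm_num)

lemma aux_L1 {n : ℕ} (a b : ℝ) : ∃ K : ℝ, 0 ≤ K ∧ ∀ g : L2I n a b,
    ∫ x, ‖g x‖ ∂(muI a b) ≤ K * ‖g‖ := by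
  refine ⟨((muI a b) univ ^ (1/2 : ℝ)).toReal, by positivity, fun g => ?_⟩
  have h := eLpNorm_le_eLpNorm_mul_rpow_measure_univ (p := 1) (q := 2) (by norm_num)
    (Lp.memLp g).1
  rw [integral_norm_eq_lintegral_enorm (Lp.memLp g).1, ← eLpNorm_one_eq_lintegral_enorm,
    Lp.norm_def, mul_comm, ← ENNReal.toReal_mul]
  apply ENNReal.toReal_mono
  · refine ENNReal.mul_ne_top (Lp.memLp g).2.ne ?_
    apply ENNReal.rpow_ne_top_of_nonneg (by norm_num) (measure_ne_top _ _)
  · convert h using 3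
    norm_num

lemma aux_sub {n : ℕ} {a b x y : ℝ} (g h : ℝ → Eu n) (hgh : g =ᵐ[muI a b] h)
    (hx : x ∈ Icc a b) (hy : y ∈ Icc a b) : ∫ t in x..y, g t = ∫ t in x..y, h t := by
  apply intervalIntegral.integral_congr_ae_restrict
  have h1 : volume.restrict (uIoc x y) ≤ muI a b := by
    rw [muI, Measure.restrict_congr_set Ioo_ae_eq_Ioc]
    apply Measure.restrict_mono _ le_rfl
    rw [uIoc]
    exact Ioc_subset_Ioc (le_min hx.1 hy.1) (max_le hx.2 hy.2)
  exact ae_mono h1 hgh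

lemma aux_ii {n : ℕ} {a b x y : ℝ} (g : ℝ → Eu n) (hg : Integrable g (muI a b))
    (hx : x ∈ Icc a b) (hy : y ∈ Icc a b) : IntervalIntegrable g volume x y := by
  rw [intervalIntegrable_iff]
  have hg' : IntegrableOn g (Ioc a b) := by
    rw [IntegrableOn, Measure.restrict_congr_set Ioo_ae_eq_Ioc.symm]; exact hg
  apply hg'.mono_set
  rw [uIoc]
  exact Ioc_subset_Ioc (le_min hx.1 hy.1) (max_le hx.2 hy.2)

/-- Primitive. -/
def prim {n : ℕ} {a b : ℝ} (p : Eu n × L2I n a b) (x : ℝ) : Eu n := p.1 + ∫ t in a..x, p.2 t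

lemma prim_sub {n : ℕ} {a b : ℝ} (hab : a < b) (p : Eu n × L2I n a b) (x y : ℝ)
    (hx : x ∈ Icc a b) (hy : y ∈ Icc a b) : prim p y - prim p x = ∫ t in x..y, p.2 t := by
  have ha : a ∈ Icc a b := ⟨le_rfl, hab.le⟩
  have := intervalIntegral.integral_interval_sub_left (aux_ii _ (aux_int p.2) ha hy)
    (aux_ii _ (aux_int p.2) ha hx)
  simp only [prim, ← this]; abel

lemma prim_cont {n : ℕ} {a b : ℝ} (hab : a < b) (p : Eu n × L2I n a b) :
    ContinuousOn (prim p) (Icc a b) := by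
  refine continuousOn_const.add ?_
  have := intervalIntegral.continuousOn_primitive_interval (μ := volume) (f := p.2) (a := a) (b := b) ?_
  · rwa [uIcc_of_le hab.le] at this
  · rw [uIcc_of_le hab.le, IntegrableOn, Measure.restrict_congr_set Ioo_ae_eq_Icc.symm]
    exact aux_int p.2

lemma prim_bound {n : ℕ} {a b : ℝ} (p : Eu n × L2I n a b) {K : ℝ} 
    (h : ∀ g : L2I n a b, ∫ x, ‖g x‖ ∂(muI a b) ≤ K * ‖g‖) (x : ℝ) (hx : x ∈ Ioo a b) :
    ‖prim p x‖ ≤ ‖p.1‖ + K * ‖p.2‖ := by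
  refine (norm_add_le _ _).trans ?_
  gcongr
  refine le_trans ?_ (h p.2)
  rw [intervalIntegral.integral_of_le hx.1.le]
  refine (norm_integral_le_integral_norm _).trans ?_
  refine le_trans ?_ (integral_Ioc_eq_integral_Ioo (f := fun x => ‖p.2 x‖)).le
  apply setIntegral_mono_set
  · exact (integrableOn_Ioc_iff_integrableOn_Ioo (μ := volume)).2 (aux_int p.2).norm
  · exact Eventually.of_forall fun _ => norm_nonneg _
  · exact (Ioc_subset_Ioc le_rfl hx.2.le).eventuallyLE

lemma cont_memLp {n : ℕ} {a b : ℝ} (w : ℝ → Eu n)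
    (hw : ContinuousOn w (Icc a b)) : MemLp w 2 (muI a b) := by
  obtain ⟨C, hC⟩ := isCompact_Icc.exists_bound_of_continuousOn hw
  refine MemLp.of_bound ((hw.mono Ioo_subset_Icc_self).aestronglyMeasurable measurableSet_Ioo) C ?_
  filter_upwards [ae_restrict_mem measurableSet_Ioo] with x hx
  exact hC x (Ioo_subset_Icc_self hx)

lemma aux_T {n : ℕ} {a b : ℝ} (hab : a < b) : ∃ T : (Eu n × L2I n a b) →L[ℝ] L2I n a b,
    ∀ p, T p =ᵐ[muI a b] prim p := by
  obtain ⟨K, hK0, hK⟩ := aux_L1 (n := n) a b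
  have hmem : ∀ p : Eu n × L2I n a b, MemLp (prim p) 2 (muI a b) :=
    fun p => cont_memLp _ (prim_cont hab p)
  have ha : a ∈ Icc a b := ⟨le_rfl, hab.le⟩
  let T0 : (Eu n × L2I n a b) →ₗ[ℝ] L2I n a b :=
    { toFun := fun p => (hmem p).toLp
      map_add' := by
        intro p q
        rw [← MemLp.toLp_add]
        apply MemLp.toLp_congr
        filter_upwards [ae_restrict_mem measurableSet_Ioo] with x hx
        have hx' := Ioo_subset_Icc_self hx
        have := aux_sub _ _ (Lp.coeFn_add p.2 q.2) ha hx'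
        simp only [prim, Prod.snd_add, Prod.fst_add, Pi.add_apply] at this ⊢
        rw [this, intervalIntegral.integral_add (aux_ii _ (aux_int p.2) ha hx')
          (aux_ii _ (aux_int q.2) ha hx')]
        abel
      map_smul' := by
        intro c q
        rw [RingHom.id_apply, ← MemLp.toLp_const_smul]
        apply MemLp.toLp_congr
        filter_upwards [ae_restrict_mem measurableSet_Ioo] with x hx
        have hx' := Ioo_subset_Icc_self hx
        have := aux_sub _ _ (Lp.coeFn_smul c q.2) ha hx'
        simp only [prim, Prod.smul_snd, Prod.smul_fst, Pi.smul_apply] at this ⊢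
        rw [this, intervalIntegral.integral_smul, smul_add] }
  refine ⟨T0.mkContinuous ((((muI a b) univ).toReal) ^ ((2 : ℝ≥0∞).toReal)⁻¹ * (1 + K)) ?_, ?_⟩
  · intro p
    rw [mul_assoc]
    refine Lp.norm_le_of_ae_bound (by positivity) ?_
    filter_upwards [(hmem p).coeFn_toLp, ae_restrict_mem measurableSet_Ioo] with x hx hx2
    change ‖(hmem p).toLp (prim p) x‖ ≤ _
    rw [hx]
    refine (prim_bound p hK x hx2).trans ?_
    have h1 := norm_fst_le p
    have h2 := norm_snd_le p
    nlinarith [mul_le_mul_of_nonneg_left h2 hK0]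
  · intro p
    exact (hmem p).coeFn_toLp

lemma aux_lower {n : ℕ} {a b : ℝ} (hab : a < b) (T : (Eu n × L2I n a b) →L[ℝ] L2I n a b)
    (hT : ∀ p, T p =ᵐ[muI a b] prim p) :
    ∃ C : ℝ, 0 < C ∧ ∀ p, ‖p‖ ^ 2 ≤ C * (‖T p‖ ^ 2 + ‖p.2‖ ^ 2) := by
  have ha : a ∈ Icc a b := ⟨le_rfl, hab.le⟩
  have hc : ∀ c : Eu n, ‖T (c, 0)‖ ^ 2 = (b - a) * ‖c‖ ^ 2 := by
    intro c
    rw [aux_L2_sq]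
    have : ∫ x, ‖T (c, 0) x‖ ^ 2 ∂(muI a b) = ∫ x, ‖c‖ ^ 2 ∂(muI a b) := by
      apply integral_congr_ae
      filter_upwards [hT (c, 0), ae_restrict_mem measurableSet_Ioo] with x hx hx2
      rw [hx, prim]
      have := aux_sub _ _ (Lp.coeFn_zero (Eu n) 2 (muI a b)) ha (Ioo_subset_Icc_self hx2)
      simp only [this]
      simp
    rw [this]
    simp [hab.le]
  have hba : 0 < b - a := by linarith
  have hC : ∀ p : Eu n × L2I n a b, ‖p.1‖ ^ 2 ≤ (2 / (b-a)) * (‖T p‖ ^ 2 + ‖T‖ ^ 2 * ‖p.2‖ ^ 2) := by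
    intro p
    have h1 : T (p.1, 0) = T p - T (0, p.2) := by
      rw [← map_sub]; congr 1; ext1 <;> simp
    have h2 : ‖T (p.1, 0)‖ ≤ ‖T p‖ + ‖T‖ * ‖p.2‖ := by
      rw [h1]
      refine (norm_sub_le _ _).trans ?_
      gcongr
      refine (T.le_opNorm _).trans ?_
      simp [Prod.norm_def]
    have h3 := pow_le_pow_left₀ (norm_nonneg _) h2 2
    rw [hc] at h3
    rw [div_mul_eq_mul_div, le_div_iff₀ hba]
    nlinarith [sq_nonneg (‖T p‖ - ‖T‖ * ‖p.2‖)]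
  refine ⟨2 / (b-a) * (1 + ‖T‖ ^ 2) + 1, by positivity, fun p => ?_⟩
  have h := hC p
  have hk : 0 < 2 / (b-a) := by positivity
  set k := 2 / (b-a)
  have : ‖p‖ ^ 2 ≤ ‖p.1‖ ^ 2 + ‖p.2‖ ^ 2 := by
    rw [Prod.norm_def]
    rcases max_cases ‖p.1‖ ‖p.2‖ with ⟨h, _⟩ | ⟨h, _⟩ <;> rw [h] <;> nlinarith [sq_nonneg ‖p.1‖, sq_nonneg ‖p.2‖]
  have e1 : 0 ≤ k * ‖T‖ ^ 2 * ‖T p‖ ^ 2 := by positivity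
  have e2 : 0 ≤ k * ‖p.2‖ ^ 2 := by positivity
  nlinarith [sq_nonneg ‖T p‖]

/-- sqrt part of the energy. -/
def Phi {n : ℕ} {a b : ℝ} (ε : ℝ) (g : L2I n a b) : ℝ :=
  ∫ x, Real.sqrt (‖g x‖ ^ 2 + ε ^ 2) ∂(muI a b)

lemma sqrt_int {n : ℕ} {a b : ℝ} (ε : ℝ) (w : ℝ → Eu n)
    (hw : Integrable (fun x => ‖w x‖ ^ 2) (muI a b)) :
    Integrable (fun x => Real.sqrt (‖w x‖ ^ 2 + ε ^ 2)) (muI a b) := by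
  refine (hw.add (integrable_const (ε ^ 2 + 1))).mono'
    (Real.continuous_sqrt.comp_aestronglyMeasurable (hw.1.add aestronglyMeasurable_const)) ?_
  refine Eventually.of_forall fun x => ?_
  rw [Real.norm_eq_abs, abs_of_nonneg (Real.sqrt_nonneg _)]
  apply Real.sqrt_le_iff.2
  simp only [Pi.add_apply]
  constructor
  · positivity
  · nlinarith [sq_nonneg ‖w x‖, sq_nonneg ε, sq_nonneg (‖w x‖ ^ 2 + ε ^ 2)]

lemma sq_int {n : ℕ} {a b : ℝ} (g : L2I n a b) : Integrable (fun x => ‖g x‖ ^ 2) (muI a b) :=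
  (Lp.memLp g).integrable_norm_pow (by norm_num)

lemma Phi_cont {n : ℕ} {a b : ℝ} (ε : ℝ) (hε : 0 < ε) : Continuous (Phi (n := n) (a := a) (b := b) ε) := by
  obtain ⟨K, hK0, hK⟩ := aux_L1 (n := n) a b
  refine (LipschitzWith.of_dist_le_mul (K := ⟨K, hK0⟩) fun g h => ?_).continuous
  rw [Real.dist_eq, dist_eq_norm]
  refine le_trans ?_ (hK (g - h))
  rw [Phi, Phi, ← integral_sub (sqrt_int _ _ (sq_int g)) (sqrt_int _ _ (sq_int h))]
  refine (abs_integral_le_integral_abs).trans ?_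
  refine integral_mono_ae ((sqrt_int _ _ (sq_int g)).sub (sqrt_int _ _ (sq_int h))).norm
    (aux_int (g - h)).norm ?_
  filter_upwards [Lp.coeFn_sub g h] with x hx
  rw [hx]
  exact (aux_sqrt_lip ε _ _ hε).trans (abs_norm_sub_norm_le _ _)

lemma Phi_mid {n : ℕ} {a b : ℝ} (ε : ℝ) (g h : L2I n a b) :
    Phi ε ((1/2 : ℝ) • (g + h)) ≤ (Phi ε g + Phi ε h) / 2 := by
  rw [Phi, Phi, Phi, ← integral_add (sqrt_int _ _ (sq_int g)) (sqrt_int _ _ (sq_int h)),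
    ← integral_div]
  refine integral_mono_ae (sqrt_int _ _ (sq_int _))
    (((sqrt_int _ _ (sq_int g)).add (sqrt_int _ _ (sq_int h))).div_const 2) ?_
  filter_upwards [Lp.coeFn_add g h, Lp.coeFn_smul (1/2 : ℝ) (g + h)] with x hx hx2
  rw [hx2, Pi.smul_apply, hx]
  exact aux_sqrt_mid ε _ _

/-- abstract energy -/
def Fen {n : ℕ} {a b : ℝ} (lam ε : ℝ) (f0 : L2I n a b) (T : (Eu n × L2I n a b) →L[ℝ] L2I n a b)
    (p : Eu n × L2I n a b) : ℝ :=
  (1 / (2 * lam)) * ‖T p - f0‖ ^ 2 + Phi ε p.2 + (ε ^ 2 / 2) * ‖p.2‖ ^ 2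

lemma par_mid {V : Type*} [NormedAddCommGroup V] [InnerProductSpace ℝ V] (x y : V) :
    ‖(1/2 : ℝ) • (x + y)‖ ^ 2 = (‖x‖ ^ 2 + ‖y‖ ^ 2) / 2 - ‖x - y‖ ^ 2 / 4 := by
  have := parallelogram_law_with_norm ℝ x y
  rw [norm_smul, mul_pow]
  norm_num
  nlinarith

lemma Fen_mid {n : ℕ} {a b : ℝ} (hab : a < b) (lam ε : ℝ) (hlam : 0 < lam) (hε : 0 < ε)
    (f0 : L2I n a b) (T : (Eu n × L2I n a b) →L[ℝ] L2I n a b)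
    (hT : ∀ p, T p =ᵐ[muI a b] prim p) : ∃ κ : ℝ, 0 < κ ∧ ∀ p q,
    Fen lam ε f0 T ((1/2 : ℝ) • (p + q)) ≤
      (Fen lam ε f0 T p + Fen lam ε f0 T q) / 2 - κ * ‖p - q‖ ^ 2 := by
  obtain ⟨C, hC0, hC⟩ := aux_lower hab T hT
  set α := 1 / (2 * lam) with hα
  have hα0 : 0 < α := by positivity
  set β := ε ^ 2 / 2 with hβ
  have hβ0 : 0 < β := by positivity
  refine ⟨min α β / 4 / C, by positivity, fun p q => ?_⟩
  have h1 : T ((1/2 : ℝ) • (p + q)) - f0 = (1/2 : ℝ) • ((T p - f0) + (T q - f0)) := by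
    rw [map_smul, map_add]; module
  have h2 := par_mid (T p - f0) (T q - f0)
  have h3 := par_mid p.2 q.2
  have h4 := Phi_mid ε p.2 q.2
  have h5 := hC (p - q)
  have h6 : (T p - f0) - (T q - f0) = T (p - q) := by rw [map_sub]; abel
  rw [h6] at h2
  have h7 : min α β / 4 / C * ‖p - q‖ ^ 2 ≤ α / 4 * ‖T (p - q)‖ ^ 2 + β / 4 * ‖p.2 - q.2‖ ^ 2 := by
    calc _ ≤ min α β / 4 / C * (C * (‖T (p - q)‖ ^ 2 + ‖(p - q).2‖ ^ 2)) := by gcongr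
      _ = min α β / 4 * ‖T (p - q)‖ ^ 2 + min α β / 4 * ‖p.2 - q.2‖ ^ 2 := by
        rw [Prod.snd_sub]; field_simp
      _ ≤ _ := by gcongr; exacts [min_le_left _ _, min_le_right _ _]
  have e : ((1/2 : ℝ) • (p + q)).2 = (1/2 : ℝ) • (p.2 + q.2) := rfl
  simp only [Fen, ← hα, ← hβ]
  rw [h1, e, h2, h3]
  linarith

lemma Fen_cont {n : ℕ} {a b : ℝ} (lam ε : ℝ) (hε : 0 < ε)
    (f0 : L2I n a b) (T : (Eu n × L2I n a b) →L[ℝ] L2I n a b) : Continuous (Fen lam ε f0 T) := by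
  have := (Phi_cont (n := n) (a := a) (b := b) ε hε).comp (continuous_snd (X := Eu n))
  unfold Fen
  exact ((by fun_prop : Continuous _).add this).add (by fun_prop)

lemma Fen_nonneg {n : ℕ} {a b : ℝ} (lam ε : ℝ) (hlam : 0 < lam)
    (f0 : L2I n a b) (T : (Eu n × L2I n a b) →L[ℝ] L2I n a b) (p) : 0 ≤ Fen lam ε f0 T p := by
  have : 0 ≤ Phi ε p.2 := integral_nonneg fun x => Real.sqrt_nonneg _
  unfold Fen
  positivity

lemma en_eq {n : ℕ} {a b : ℝ} (lam ε : ℝ) (f : ℝ → Eu n) (hf : MemLp f 2 (muI a b))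
    (T : (Eu n × L2I n a b) →L[ℝ] L2I n a b)
    (hT : ∀ p, T p =ᵐ[muI a b] prim p) (p : Eu n × L2I n a b) (w w' : ℝ → Eu n)
    (hw : ∀ x ∈ Icc a b, w x = prim p x) (hw' : p.2 =ᵐ[muI a b] w') :
    regEnergy lam ε a b f w w' = Fen lam ε hf.toLp T p := by
  rw [Fen, Phi, aux_L2_sq, aux_L2_sq, ← integral_const_mul, ← integral_const_mul,
    ← integral_add ((sq_int _).const_mul _) (sqrt_int _ _ (sq_int _)),
    ← integral_add (by exact ((sq_int _).const_mul _).add (sqrt_int _ _ (sq_int _)))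
      ((sq_int _).const_mul _)]
  apply integral_congr_ae
  filter_upwards [hT p, hw', hf.coeFn_toLp, Lp.coeFn_sub (T p) hf.toLp,
    ae_restrict_mem measurableSet_Ioo] with x h1 h2 h3 h4 h5
  rw [h4, Pi.sub_apply, h1, h2, h3, hw x (Ioo_subset_Icc_self h5)]

lemma to_p {n : ℕ} {a b : ℝ} (hab : a < b) (lam ε : ℝ) (hlam : 0 < lam) (f : ℝ → Eu n)
    (hf : MemLp f 2 (muI a b))
    (T : (Eu n × L2I n a b) →L[ℝ] L2I n a b)
    (hT : ∀ p, T p =ᵐ[muI a b] prim p) (w w' : ℝ → Eu n) (h : InH1 a b w w') :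
    ∃ p : Eu n × L2I n a b, (∀ x ∈ Icc a b, w x = prim p x) ∧
      Fen lam ε hf.toLp T p ≤ regEnergy lam ε a b f w w' := by
  obtain ⟨hc, hi, hF⟩ := h
  have ha : a ∈ Icc a b := ⟨le_rfl, hab.le⟩
  have hb : b ∈ Icc a b := ⟨hab.le, le_rfl⟩
  by_cases hm : AEStronglyMeasurable w' (muI a b)
  · have hL : MemLp w' 2 (muI a b) := (memLp_two_iff_integrable_sq_norm hm).2 hi
    have hw : ∀ x ∈ Icc a b, w x = prim (w a, hL.toLp) x := by
      intro x hx
      rw [prim, aux_sub _ _ hL.coeFn_toLp ha hx, ← hF a ha x hx]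
      abel
    exact ⟨(w a, hL.toLp), hw, (en_eq lam ε f hf T hT _ _ _ hw hL.coeFn_toLp).ge⟩
  · have key : ∀ x ∈ Icc a b, ∀ y ∈ Icc a b, x ≤ y →
        w y = w x ∨ AEStronglyMeasurable w' (volume.restrict (Ioc x y)) := by
      intro x hx y hy hxy
      by_cases h : AEStronglyMeasurable w' (volume.restrict (Ioc x y))
      · exact Or.inr h
      · left
        rw [← sub_eq_zero, hF x hx y hy, intervalIntegral.integral_of_le hxy]
        exact integral_undef fun hh => h hh.1
    have hm' : ¬ AEStronglyMeasurable w' (volume.restrict (Ioc a b)) := by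
      rwa [Measure.restrict_congr_set Ioo_ae_eq_Ioc.symm]
    have hba : w b = w a := (key a ha b hb hab.le).resolve_right hm'
    have hconst : ∀ x ∈ Icc a b, w x = w a := by
      intro x hx
      rcases key a ha x hx hx.1 with h1 | h1
      · exact h1
      rcases key x hx b hb hx.2 with h2 | h2
      · rw [← h2, hba]
      exfalso
      apply hm'
      rw [← Ioc_union_Ioc_eq_Ioc hx.1 hx.2]
      exact aestronglyMeasurable_union_iff.2 ⟨h1, h2⟩
    have hw : ∀ x ∈ Icc a b, w x = prim (a := a) (b := b) (w a, 0) x := by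
      intro x hx
      rw [prim, aux_sub _ _ (Lp.coeFn_zero (Eu n) 2 (muI a b)) ha hx, hconst x hx]
      simp
    refine ⟨(w a, 0), hw, ?_⟩
    rw [← en_eq lam ε f hf T hT _ w 0 hw (Lp.coeFn_zero _ _ _)]
    have hwf : Integrable (fun x => (1 / (2 * lam)) * ‖w x - f x‖ ^ 2) (muI a b) :=
      (((cont_memLp w hc).sub hf).integrable_norm_pow (by norm_num)).const_mul _
    apply integral_mono
    · exact (hwf.add (sqrt_int ε 0 (by simp))).add (by simp)
    · exact (hwf.add (sqrt_int ε w' hi)).add (hi.const_mul _)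
    · intro x
      dsimp only
      gcongr <;> simp

/-- for every `ε > 0` the regularized energy `E_ε` admits a minimizer over
`H¹(I,ℝⁿ)`, unique in the sense that two minimizers agree on `[a,b]`. -/
theorem regEnergy_exists_unique_minimizer
    {n : ℕ} (hn : 1 ≤ n) (a b : ℝ) (hab : a < b) (lam : ℝ) (hlam : 0 < lam)
    (ε : ℝ) (hε : 0 < ε)
    (f : ℝ → EuclideanSpace ℝ (Fin n)) (hf_meas : Measurable f)
    (hf_sq : SqIntOn f (Set.Ioo a b)) :
    (∃ u u' : ℝ → EuclideanSpace ℝ (Fin n), IsMinimizerEps lam ε a b f u u') ∧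
    ∀ u₁ u₁' u₂ u₂' : ℝ → EuclideanSpace ℝ (Fin n),
      IsMinimizerEps lam ε a b f u₁ u₁' → IsMinimizerEps lam ε a b f u₂ u₂' →
      Set.EqOn u₁ u₂ (Set.Icc a b) := by
  have hf : MemLp f 2 (muI a b) :=
    (memLp_two_iff_integrable_sq_norm hf_meas.aestronglyMeasurable).2 hf_sq
  obtain ⟨T, hT⟩ := aux_T (n := n) hab
  obtain ⟨κ, hκ, hmid⟩ := Fen_mid hab lam ε hlam hε hf.toLp T hT
  have hreal : ∀ p : Eu n × L2I n a b, InH1 a b (prim p) p.2 :=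
    fun p => ⟨prim_cont hab p, sq_int p.2, fun x hx y hy => prim_sub hab p x y hx hy⟩
  have hen : ∀ p : Eu n × L2I n a b, regEnergy lam ε a b f (prim p) p.2 = Fen lam ε hf.toLp T p :=
    fun p => en_eq lam ε f hf T hT p _ _ (fun _ _ => rfl) (EventuallyEq.refl _ _)
  constructor
  · obtain ⟨p, hp⟩ := aux_min (Fen lam ε hf.toLp T) (Fen_cont lam ε hε _ T)
      (Fen_nonneg lam ε hlam _ T) κ hκ hmid
    refine ⟨prim p, p.2, hreal p, fun v v' hv => ?_⟩
    obtain ⟨q, -, hq⟩ := to_p hab lam ε hlam f hf T hT v v' hv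
    rw [hen]
    exact (hp q).trans hq
  · intro u₁ u₁' u₂ u₂' h1 h2
    obtain ⟨p, hp, hpe⟩ := to_p hab lam ε hlam f hf T hT u₁ u₁' h1.1
    obtain ⟨q, hq, hqe⟩ := to_p hab lam ε hlam f hf T hT u₂ u₂' h2.1
    have a1 := h1.2 _ _ (hreal ((1/2 : ℝ) • (p + q)))
    have a2 := h2.2 _ _ (hreal ((1/2 : ℝ) • (p + q)))
    rw [hen] at a1 a2
    have a3 := hmid p q
    have a4 : κ * ‖p - q‖ ^ 2 ≤ 0 := by linarith
    have a5 : ‖p - q‖ ^ 2 ≤ 0 := by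
      by_contra hh
      push Not at hh
      have := mul_pos hκ hh
      linarith
    have a6 : p = q := by
      have : ‖p - q‖ = 0 := by nlinarith [norm_nonneg (p - q), sq_nonneg ‖p - q‖]
      exact sub_eq_zero.1 (norm_eq_zero.1 this)
    intro x hx
    rw [hp x hx, hq x hx, a6]
end
end

section
/- Suppose f ∈ H¹(I,ℝⁿ) with derivative f', and let u_ε be the minimizer of E_ε over H¹(I,ℝⁿ), with derivative u_ε'. Then for every p ∈ [1,2], ∫_I |u_ε'|_ε^p ≤ p ε^p (b − a) + ∫_I ‖f'‖^p. -/
open MeasureTheory Set Filter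
open scoped ENNReal

noncomputable section

set_option linter.unusedSectionVars false
set_option linter.unusedVariables false

section Algebra

variable {E : Type*} [NormedAddCommGroup E] [InnerProductSpace ℝ E]

/-- regularized norm -/
def rS (ε : ℝ) (v : E) : ℝ := Real.sqrt (‖v‖ ^ 2 + ε ^ 2)

/-- gradient of the integrand -/
def rF (ε : ℝ) (v : E) : E := (rS ε v)⁻¹ • v + ε ^ 2 • v

/-- test field -/
def rG (ε p : ℝ) (v : E) : E := (rS ε v ^ (p - 2)) • v

lemma rS_sq (ε : ℝ) (v : E) : rS ε v ^ 2 = ‖v‖ ^ 2 + ε ^ 2 :=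
  Real.sq_sqrt (by positivity)

lemma rS_pos {ε : ℝ} (hε : 0 < ε) (v : E) : 0 < rS ε v :=
  Real.sqrt_pos.2 (by positivity)

lemma le_rS {ε : ℝ} (hε : 0 < ε) (v : E) : ε ≤ rS ε v :=
  Real.le_sqrt_of_sq_le (by nlinarith [sq_nonneg ‖v‖])

lemma norm_le_rS (ε : ℝ) (v : E) : ‖v‖ ≤ rS ε v :=
  Real.le_sqrt_of_sq_le (by nlinarith [sq_nonneg ε])

lemma rS_mono (ε : ℝ) {v w : E} (h : ‖v‖ ≤ ‖w‖) : rS ε v ≤ rS ε w :=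
  Real.sqrt_le_sqrt (by gcongr)

lemma rS_lip {ε : ℝ} (hε : 0 < ε) {v w : E} (h : ‖v‖ ≤ ‖w‖) :
    rS ε w - rS ε v ≤ ‖w - v‖ := by
  have h1 := rS_sq ε v
  have h2 := rS_sq ε w
  have h3 := rS_pos hε v
  have h4 := norm_le_rS ε v
  have h5 := norm_le_rS ε w
  have h6 : ‖w‖ - ‖v‖ ≤ ‖w - v‖ := norm_sub_norm_le w v
  have h7 := rS_mono ε h
  refine le_trans ?_ h6
  by_contra hc
  push Not at hc
  nlinarith [norm_nonneg v, norm_nonneg w]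

lemma radial {x1 x2 y1 y2 : ℝ} (v w : E) (hx1 : 0 ≤ x1) (hx2 : 0 ≤ x2) (hy1 : 0 ≤ y1)
    (hy2 : 0 ≤ y2) (h : 0 ≤ (x1 * ‖v‖ - x2 * ‖w‖) * (y1 * ‖v‖ - y2 * ‖w‖)) :
    0 ≤ inner ℝ (x1 • v - x2 • w) (y1 • v - y2 • w) := by
  have hc : inner ℝ v w ≤ ‖v‖ * ‖w‖ := real_inner_le_norm v w
  simp only [inner_sub_left, inner_sub_right, real_inner_smul_left, real_inner_smul_right,
    real_inner_self_eq_norm_sq, real_inner_comm v w]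
  have h1 : (x1 * y2 + x2 * y1) * inner ℝ v w ≤ (x1 * y2 + x2 * y1) * (‖v‖ * ‖w‖) := by
    gcongr
  nlinarith

lemma prof_inv {ε : ℝ} (hε : 0 < ε) {v w : E} (h : ‖v‖ ≤ ‖w‖) :
    (rS ε v)⁻¹ * ‖v‖ ≤ (rS ε w)⁻¹ * ‖w‖ := by
  have h3 := rS_pos hε v
  have h4 := rS_pos hε w
  rw [inv_mul_eq_div, inv_mul_eq_div, div_le_div_iff₀ h3 h4]
  rw [← sq_le_sq₀ (by positivity) (by positivity)]
  rw [mul_pow, mul_pow, rS_sq, rS_sq]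
  have : ‖v‖ ^ 2 ≤ ‖w‖ ^ 2 := by gcongr
  nlinarith [sq_nonneg ε]

lemma prof_G {ε p : ℝ} (hε : 0 < ε) (hp : 1 ≤ p) {v w : E} (h : ‖v‖ ≤ ‖w‖) :
    (rS ε v) ^ (p - 2) * ‖v‖ ≤ (rS ε w) ^ (p - 2) * ‖w‖ := by
  have h3 := rS_pos hε v
  have h4 := rS_pos hε w
  have key : ∀ s : ℝ, 0 < s → s ^ (p - 2) = s ^ (p - 1) * s⁻¹ := by
    intro s hs
    rw [← Real.rpow_neg_one s, ← Real.rpow_add hs]; ring_nf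
  rw [key _ h3, key _ h4, mul_assoc, mul_assoc]
  have := prof_inv hε h
  have h5 := Real.rpow_le_rpow h3.le (rS_mono ε h) (by linarith : 0 ≤ p - 1)
  gcongr

lemma mono_GF {ε p : ℝ} (hε : 0 < ε) (hp : 1 ≤ p) (v w : E) :
    0 ≤ inner ℝ (rG ε p v - rG ε p w) (rF ε v - rF ε w) := by
  have h3 := rS_pos hε v
  have h4 := rS_pos hε w
  have : ∀ v : E, rF ε v = ((rS ε v)⁻¹ + ε ^ 2) • v := fun v => by rw [rF, add_smul]
  rw [this, this, rG, rG]
  apply radial _ _ (by positivity) (by positivity) (by positivity) (by positivity)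
  rcases le_total ‖v‖ ‖w‖ with h | h
  · have h1 := prof_G hε hp h
    have h2 := prof_inv hε h
    apply mul_nonneg_of_nonpos_of_nonpos
    · linarith
    · nlinarith [sq_nonneg ε]
  · have h1 := prof_G hε hp h
    have h2 := prof_inv hε h
    apply mul_nonneg
    · linarith
    · nlinarith [sq_nonneg ε]

lemma strong_F {ε : ℝ} (hε : 0 < ε) (v w : E) : ε ^ 2 * ‖v - w‖ ≤ ‖rF ε v - rF ε w‖ := by
  have h3 := rS_pos hε v
  have h4 := rS_pos hε w
  have h0 : 0 ≤ inner ℝ ((rS ε v)⁻¹ • v - (rS ε w)⁻¹ • w) ((1:ℝ) • v - (1:ℝ) • w) := by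
    apply radial _ _ (by positivity) (by positivity) (by positivity) (by positivity)
    rcases le_total ‖v‖ ‖w‖ with h | h
    · have h2 := prof_inv hε h
      apply mul_nonneg_of_nonpos_of_nonpos <;> linarith
    · have h2 := prof_inv hε h
      apply mul_nonneg <;> linarith
  rw [one_smul, one_smul] at h0
  have h1 : rF ε v - rF ε w = ((rS ε v)⁻¹ • v - (rS ε w)⁻¹ • w) + ε ^ 2 • (v - w) := by
    rw [rF, rF, smul_sub]; abel
  have h2 : ε ^ 2 * ‖v - w‖ ^ 2 ≤ inner ℝ (rF ε v - rF ε w) (v - w) := by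
    rw [h1, inner_add_left, real_inner_smul_left, real_inner_self_eq_norm_sq]
    linarith
  have h5 := real_inner_le_norm (rF ε v - rF ε w) (v - w)
  rcases (norm_nonneg (v - w)).eq_or_lt with h | h
  · rw [← h]; simp
  · nlinarith

lemma lip_G {ε p : ℝ} (hε : 0 < ε) (hp : 1 ≤ p) (hp2 : p ≤ 2) (v w : E) :
    ‖rG ε p v - rG ε p w‖ ≤ 2 * ε ^ (p - 2) * ‖v - w‖ := by
  wlog h : ‖v‖ ≤ ‖w‖ generalizing v w
  · rw [norm_sub_rev, norm_sub_rev v]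
    exact this w v (le_of_not_ge h)
  have h3 := rS_pos hε v
  have h4 := rS_pos hε w
  have hm := rS_mono ε h
  have hl := rS_lip hε h
  have hnv := norm_le_rS ε v
  set m := rS ε v with hmdef
  set M := rS ε w with hMdef
  have e1 : m ^ (p - 2) ≤ ε ^ (p - 2) :=
    Real.rpow_le_rpow_of_nonpos hε (le_rS hε v) (by linarith)
  have e2 : M ^ (p - 2) ≤ ε ^ (p - 2) :=
    Real.rpow_le_rpow_of_nonpos hε (le_rS hε w) (by linarith)
  have e3 : M ^ (p - 2) ≤ m ^ (p - 2) :=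
    Real.rpow_le_rpow_of_nonpos h3 hm (by linarith)
  have e4 : m ^ (p - 2) * m ≤ M ^ (p - 2) * M := by
    have key : ∀ s : ℝ, 0 < s → s ^ (p - 2) * s = s ^ (p - 1) := by
      intro s hs
      nth_rw 2 [← Real.rpow_one s]
      rw [← Real.rpow_add hs]; ring_nf
    rw [key _ h3, key _ h4]
    exact Real.rpow_le_rpow h3.le hm (by linarith)
  have e5 : (m ^ (p - 2) - M ^ (p - 2)) * m ≤ m ^ (p - 2) * (M - m) := by
    nlinarith [Real.rpow_nonneg h3.le (p-2), Real.rpow_nonneg h4.le (p-2)]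
  have e6 : rG ε p v - rG ε p w = M ^ (p - 2) • (v - w) + (m ^ (p - 2) - M ^ (p - 2)) • v := by
    rw [rG, rG, smul_sub, sub_smul]; abel
  have hmn : 0 ≤ m ^ (p - 2) := Real.rpow_nonneg h3.le _
  have hMn : 0 ≤ M ^ (p - 2) := Real.rpow_nonneg h4.le _
  calc ‖rG ε p v - rG ε p w‖
      ≤ M ^ (p - 2) * ‖v - w‖ + (m ^ (p - 2) - M ^ (p - 2)) * ‖v‖ := by
        rw [e6]
        refine (norm_add_le _ _).trans ?_
        rw [norm_smul, norm_smul, Real.norm_of_nonneg hMn,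
          Real.norm_of_nonneg (by linarith)]
    _ ≤ M ^ (p - 2) * ‖v - w‖ + (m ^ (p - 2) - M ^ (p - 2)) * m := by
        have : 0 ≤ m ^ (p - 2) - M ^ (p - 2) := by linarith
        gcongr
    _ ≤ M ^ (p - 2) * ‖v - w‖ + m ^ (p - 2) * ‖v - w‖ := by
        rw [norm_sub_rev w v] at hl
        have := mul_le_mul_of_nonneg_left hl hmn
        linarith
    _ ≤ ε ^ (p - 2) * ‖v - w‖ + ε ^ (p - 2) * ‖v - w‖ := by gcongr
    _ = _ := by ring

lemma lip_GF {ε p : ℝ} (hε : 0 < ε) (hp : 1 ≤ p) (hp2 : p ≤ 2) (v w : E) :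
    ‖rG ε p v - rG ε p w‖ ≤ 2 * ε ^ (p - 2) / ε ^ 2 * ‖rF ε v - rF ε w‖ := by
  refine (lip_G hε hp hp2 v w).trans ?_
  have := strong_F hε v w
  rw [div_mul_eq_mul_div, le_div_iff₀ (by positivity)]
  have h : 0 ≤ 2 * ε ^ (p - 2) := by positivity
  nlinarith [mul_le_mul_of_nonneg_left this h]

lemma rG_zero (ε p : ℝ) : rG ε p (0 : E) = 0 := by simp [rG]
lemma rF_zero (ε : ℝ) : rF ε (0 : E) = 0 := by simp [rF]

lemma young_pt {ε p : ℝ} (hε : 0 < ε) (hp : 1 ≤ p) (hp2 : p ≤ 2) (v w : E) :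
    1 / p * (rS ε v ^ p - ‖w‖ ^ p) - ε ^ p ≤ inner ℝ (v - w) (rG ε p v) := by
  have h3 := rS_pos hε v
  set S := rS ε v with hS
  have hp0 : 0 < p := by linarith
  have a1 : S ^ (p - 2) * S ^ 2 = S ^ p := by
    rw [← Real.rpow_natCast S 2, ← Real.rpow_add h3]; norm_num
  have a2 : ε ^ (p - 2) * ε ^ 2 = ε ^ p := by
    rw [← Real.rpow_natCast ε 2, ← Real.rpow_add hε]; norm_num
  have a3 : S ^ (p - 2) ≤ ε ^ (p - 2) :=
    Real.rpow_le_rpow_of_nonpos hε (le_rS hε v) (by linarith)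
  have hSn : 0 ≤ S ^ (p - 2) := Real.rpow_nonneg h3.le _
  have a4 : S ^ p - ε ^ p ≤ inner ℝ v (rG ε p v) := by
    rw [rG, real_inner_smul_right, real_inner_self_eq_norm_sq, ← hS]
    have : ‖v‖ ^ 2 = S ^ 2 - ε ^ 2 := by rw [hS, rS_sq]; ring
    rw [this]
    nlinarith [mul_le_mul_of_nonneg_right a3 (sq_nonneg ε)]
  have a5 : inner ℝ w (rG ε p v) ≤ ‖w‖ * S ^ (p - 1) := by
    refine (real_inner_le_norm _ _).trans ?_
    gcongr
    rw [rG, norm_smul, Real.norm_of_nonneg hSn]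
    have : S ^ (p - 1) = S ^ (p - 2) * S := by
      nth_rw 3 [← Real.rpow_one S]
      rw [← Real.rpow_add h3]; ring_nf
    rw [this]
    gcongr
    exact norm_le_rS ε v
  have a6 : ‖w‖ * S ^ (p - 1) ≤ 1 / p * ‖w‖ ^ p + (1 - 1 / p) * S ^ p := by
    have := Real.geom_mean_le_arith_mean2_weighted (w₁ := 1 / p) (w₂ := 1 - 1 / p)
      (p₁ := ‖w‖ ^ p) (p₂ := S ^ p) (by positivity)
      (by rw [sub_nonneg, div_le_one hp0]; exact hp) (by positivity) (by positivity) (by ring)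
    rw [← Real.rpow_mul (norm_nonneg _), ← Real.rpow_mul h3.le] at this
    have e1 : p * (1 / p) = 1 := by field_simp
    have e2 : p * (1 - 1 / p) = p - 1 := by field_simp
    rwa [e1, e2, Real.rpow_one] at this
  rw [inner_sub_left]
  nlinarith

lemma taylor_pt {lam ε : ℝ} (hlam : 0 < lam) (hε : 0 < ε) (q e v w : E) (t : ℝ) :
    (1 / (2 * lam)) * ‖q + t • e‖ ^ 2 + rS ε (v + t • w) + (ε ^ 2 / 2) * ‖v + t • w‖ ^ 2 ≤
    ((1 / (2 * lam)) * ‖q‖ ^ 2 + rS ε v + (ε ^ 2 / 2) * ‖v‖ ^ 2)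
    + t * (inner ℝ (lam⁻¹ • q) e + inner ℝ (rF ε v) w)
    + t ^ 2 * ((1 / (2 * lam)) * ‖e‖ ^ 2 + (1 / (2 * ε) + ε ^ 2 / 2) * ‖w‖ ^ 2) := by
  have hex : ∀ x y : E, ‖x + t • y‖ ^ 2 = ‖x‖ ^ 2 + 2 * t * inner ℝ x y + t ^ 2 * ‖y‖ ^ 2 := by
    intro x y
    rw [norm_add_sq_real, real_inner_smul_right, norm_smul, mul_pow, Real.norm_eq_abs, sq_abs]
    ring
  have h3 := rS_pos hε v
  have hle := le_rS hε v
  have hS : rS ε (v + t • w) ≤ rS ε v + t * ((rS ε v)⁻¹ * inner ℝ v w)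
      + t ^ 2 * (1 / (2 * ε) * ‖w‖ ^ 2) := by
    have hs1 := rS_sq ε v
    have hs2 := rS_sq ε (v + t • w)
    rw [hex] at hs2
    have h4 := rS_pos hε (v + t • w)
    set S := rS ε v
    set T := rS ε (v + t • w)
    have h5 : T ≤ S + (T ^ 2 - S ^ 2) / (2 * S) := by
      have : S + (T ^ 2 - S ^ 2) / (2 * S) - T = (T - S) ^ 2 / (2 * S) := by field_simp; ring
      have : 0 ≤ (T - S) ^ 2 / (2 * S) := by positivity
      linarith
    have h6 : (T ^ 2 - S ^ 2) / (2 * S) = t * (S⁻¹ * inner ℝ v w) + t ^ 2 * (1 / (2 * S) * ‖w‖ ^ 2) := by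
      rw [hs1, hs2]; field_simp; ring
    have h7 : 1 / (2 * S) ≤ 1 / (2 * ε) := by gcongr
    have h8 : t ^ 2 * (1 / (2 * S) * ‖w‖ ^ 2) ≤ t ^ 2 * (1 / (2 * ε) * ‖w‖ ^ 2) := by gcongr
    linarith
  rw [hex, hex, rF, inner_add_left, real_inner_smul_left, real_inner_smul_left,
    real_inner_smul_left]
  have : 1 / (2 * lam) = lam⁻¹ / 2 := by field_simp
  rw [this]
  nlinarith

end Algebra

section Ibp

variable {n : ℕ}

lemma ac_congr {f g : ℝ → ℝ} {a b : ℝ} (hf : AbsolutelyContinuousOnInterval f a b)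
    (h : ∀ x ∈ uIcc a b, g x = f x) : AbsolutelyContinuousOnInterval g a b := by
  rw [absolutelyContinuousOnInterval_iff] at hf ⊢
  intro e he
  obtain ⟨d, hd, H⟩ := hf e he
  refine ⟨d, hd, fun E hE hE2 => ?_⟩
  have := H E hE hE2
  rwa [Finset.sum_congr rfl (fun i hi => ?_)]
  have h1 := hE.1 i hi
  rw [h _ h1.1, h _ h1.2]

/-- `P` is an indefinite integral with a.e. derivative `p`. -/
def Prm (a b : ℝ) (P p : ℝ → EuclideanSpace ℝ (Fin n)) : Prop :=
  (∀ i, AbsolutelyContinuousOnInterval (fun x => P x i) a b) ∧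
  ∀ᵐ x, x ∈ Set.Ioo a b → HasDerivAt P (p x) x

lemma prm_of_InH1 {a b : ℝ} (hab : a < b) {w w' : ℝ → EuclideanSpace ℝ (Fin n)}
    (hw : InH1 a b w w') (hi : IntervalIntegrable w' volume a b) : Prm a b w w' := by
  have ha : a ∈ Icc a b := left_mem_Icc.2 hab.le
  constructor
  · intro i
    have hii : IntervalIntegrable (fun t => w' t i) volume a b := by
      constructor
      · exact (EuclideanSpace.proj (𝕜 := ℝ) i).integrable_comp hi.1
      · exact (EuclideanSpace.proj (𝕜 := ℝ) i).integrable_comp hi.2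
    have h1 := hii.absolutelyContinuousOnInterval_intervalIntegral (c := a) left_mem_uIcc
    have h2 : AbsolutelyContinuousOnInterval (fun _ : ℝ => w a i) a b :=
      (LipschitzWith.const (w a i)).lipschitzOnWith.absolutelyContinuousOnInterval (K := 0)
    refine ac_congr (h2.fun_add h1) ?_
    intro x hx
    rw [uIcc_of_le hab.le] at hx
    have h3 := hw.2.2 a ha x hx
    have hx' : IntervalIntegrable w' volume a x :=
      hi.mono_set (by rw [uIcc_of_le hab.le, uIcc_of_le hx.1]; exact Icc_subset_Icc_right hx.2)
    have h4 : ∫ t in a..x, w' t i = (∫ t in a..x, w' t) i :=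
      (EuclideanSpace.proj (𝕜 := ℝ) i).intervalIntegral_comp_comm hx'
    rw [h4, ← h3]
    simp
  · filter_upwards [hi.ae_hasDerivAt_integral] with x hx hxm
    have hx' : x ∈ uIcc a b := by rw [uIcc_of_le hab.le]; exact Ioo_subset_Icc_self hxm
    have h1 := hx hx' a left_mem_uIcc
    have h2 := h1.const_add (w a)
    refine h2.congr_of_eventuallyEq ?_
    filter_upwards [Ioo_mem_nhds hxm.1 hxm.2] with y hy
    rw [← hw.2.2 a ha y (Ioo_subset_Icc_self hy)]
    abel

lemma prm_of_lip {a b : ℝ} {g : ℝ → EuclideanSpace ℝ (Fin n)} {K : NNReal}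
    (hg : LipschitzWith K g) : Prm a b g (deriv g) := by
  constructor
  · intro i
    have : LipschitzWith (‖(EuclideanSpace.proj (𝕜 := ℝ) i : EuclideanSpace ℝ (Fin n) →L[ℝ] ℝ)‖₊ * K) 
        (fun x => g x i) := 
      (EuclideanSpace.proj (𝕜 := ℝ) i : EuclideanSpace ℝ (Fin n) →L[ℝ] ℝ).lipschitz.comp hg
    exact this.lipschitzOnWith.absolutelyContinuousOnInterval
  · filter_upwards [hg.ae_differentiableAt_real] with x hx _
    exact hx.hasDerivAt

lemma ibp {a b : ℝ} (hab : a < b) {P p Q q : ℝ → EuclideanSpace ℝ (Fin n)}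
    (hP : Prm a b P p) (hQ : Prm a b Q q) :
    IntegrableOn (fun x => inner ℝ (p x) (Q x) + inner ℝ (P x) (q x)) (Ioo a b) ∧
    ∫ x in Ioo a b, (inner ℝ (p x) (Q x) + inner ℝ (P x) (q x))
      = inner ℝ (P b) (Q b) - inner ℝ (P a) (Q a) := by
  have hac : AbsolutelyContinuousOnInterval (fun x => (inner ℝ (P x) (Q x) : ℝ)) a b := by
    have : ∀ s : Finset (Fin n), AbsolutelyContinuousOnInterval
        (fun x => ∑ i ∈ s, P x i * Q x i) a b := by
      intro s
      induction s using Finset.induction_on with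
      | empty =>
        simp only [Finset.sum_empty]
        exact (LipschitzWith.const (0:ℝ)).lipschitzOnWith.absolutelyContinuousOnInterval (K := 0)
      | insert i s hi ih =>
        simp only [Finset.sum_insert hi]
        exact ((hP.1 i).fun_mul (hQ.1 i)).fun_add ih
    refine ac_congr (this Finset.univ) fun x _ => ?_
    rw [PiLp.inner_apply]
    refine Finset.sum_congr rfl fun i _ => ?_
    simp [mul_comm]
  have hd : ∀ᵐ x ∂(volume.restrict (Ioo a b)), deriv (fun x => (inner ℝ (P x) (Q x) : ℝ)) x
      = inner ℝ (p x) (Q x) + inner ℝ (P x) (q x) := by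
    rw [ae_restrict_iff' measurableSet_Ioo]
    filter_upwards [hP.2, hQ.2] with x h1 h2 hx
    rw [((h1 hx).inner ℝ (h2 hx)).deriv, add_comm]
  have hint := hac.intervalIntegrable_deriv
  have hsub := hac.integral_deriv_eq_sub
  rw [intervalIntegrable_iff_integrableOn_Ioo_of_le hab.le] at hint
  rw [intervalIntegral.integral_of_le hab.le, integral_Ioc_eq_integral_Ioo] at hsub
  exact ⟨hint.congr hd, by rw [← hsub]; exact (integral_congr_ae hd).symm⟩

end Ibp

section Var

variable {n : ℕ}

lemma integrable_inner_of_memLp {X : Type*} [MeasurableSpace X] {μ : Measure X}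
    {f g : X → EuclideanSpace ℝ (Fin n)}
    (hf : MemLp f 2 μ) (hg : MemLp g 2 μ) : Integrable (fun x => (inner ℝ (f x) (g x) : ℝ)) μ := by
  have h1 := (memLp_two_iff_integrable_sq_norm hf.1).1 hf
  have h2 := (memLp_two_iff_integrable_sq_norm hg.1).1 hg
  refine (h1.add h2).mono' (hf.1.inner hg.1) (Eventually.of_forall fun x => ?_)
  have := abs_real_inner_le_norm (f x) (g x)
  simp only [Real.norm_eq_abs, Pi.add_apply]
  nlinarith [sq_nonneg (‖f x‖ - ‖g x‖), sq_nonneg ‖f x‖, sq_nonneg ‖g x‖]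

lemma memLp_cont {a b : ℝ} {w : ℝ → EuclideanSpace ℝ (Fin n)} (hw : ContinuousOn w (Icc a b)) :
    MemLp w 2 (volume.restrict (Ioo a b)) := by
  obtain ⟨C, hC⟩ := isCompact_Icc.exists_bound_of_continuousOn hw
  refine MemLp.of_bound ((hw.mono Ioo_subset_Icc_self).aestronglyMeasurable measurableSet_Ioo) C ?_
  filter_upwards [self_mem_ae_restrict measurableSet_Ioo] with x hx
  exact hC x (Ioo_subset_Icc_self hx)

lemma memLp_deriv {a b : ℝ} (hab : a < b) {w w' : ℝ → EuclideanSpace ℝ (Fin n)}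
    (hw : InH1 a b w w') (hi : IntervalIntegrable w' volume a b) :
    MemLp w' 2 (volume.restrict (Ioo a b)) := by
  rw [intervalIntegrable_iff_integrableOn_Ioo_of_le hab.le] at hi
  exact (memLp_two_iff_integrable_sq_norm hi.1).2 hw.2.1

lemma intervalIntegrable_of_memLp {a b : ℝ} (hab : a < b) {w' : ℝ → EuclideanSpace ℝ (Fin n)}
    (h : MemLp w' 2 (volume.restrict (Ioo a b))) : IntervalIntegrable w' volume a b := by
  rw [intervalIntegrable_iff_integrableOn_Ioo_of_le hab.le]
  exact h.integrable (by norm_num)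

lemma inH1_prim {a b c : ℝ} (hab : a < b) (hc : c ∈ Icc a b) {w' : ℝ → EuclideanSpace ℝ (Fin n)}
    (h : MemLp w' 2 (volume.restrict (Ioo a b))) :
    InH1 a b (fun x => ∫ t in c..x, w' t) w' := by
  have hi := intervalIntegrable_of_memLp hab h
  refine ⟨?_, (memLp_two_iff_integrable_sq_norm h.1).1 h, ?_⟩
  · have := intervalIntegral.continuousOn_primitive_interval' hi
      (by rw [uIcc_of_le hab.le]; exact hc)
    rwa [uIcc_of_le hab.le] at this
  · intro x hx y hy
    have sub : ∀ u ∈ Icc a b, IntervalIntegrable w' volume c u := by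
      intro u hu
      refine hi.mono_set ?_
      rw [uIcc_of_le hab.le]
      exact uIcc_subset_Icc hc hu
    exact intervalIntegral.integral_interval_sub_left (sub y hy) (sub x hx)

lemma dichotomy {a b : ℝ} {w w' : ℝ → EuclideanSpace ℝ (Fin n)} (hab : a < b)
    (hw : InH1 a b w w') :
    IntervalIntegrable w' volume a b ∨ ∀ x ∈ Icc a b, w x = w a := by
  by_cases h : IntervalIntegrable w' volume a b
  · exact Or.inl h
  right
  intro x hx
  have ha : a ∈ Icc a b := left_mem_Icc.2 hab.le
  have hb : b ∈ Icc a b := right_mem_Icc.2 hab.le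
  have e1 := hw.2.2 a ha b hb
  rw [intervalIntegral.integral_undef h, sub_eq_zero] at e1
  by_cases h1 : IntervalIntegrable w' volume a x
  · by_cases h2 : IntervalIntegrable w' volume x b
    · exact absurd (h1.trans h2) h
    · have e2 := hw.2.2 x hx b hb
      rw [intervalIntegral.integral_undef h2, sub_eq_zero] at e2
      rw [← e2, e1]
  · have e2 := hw.2.2 a ha x hx
    rwa [intervalIntegral.integral_undef h1, sub_eq_zero] at e2

lemma inH1_const {a b : ℝ} {w w' : ℝ → EuclideanSpace ℝ (Fin n)} (hab : a < b)
    (hw : InH1 a b w w') (h : ∀ x ∈ Icc a b, w x = w a) : InH1 a b w (fun _ => 0) := by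
  refine ⟨hw.1, by simp, ?_⟩
  intro x hx y hy
  rw [h x hx, h y hy]; simp

lemma energy_integrable {lam ε a b : ℝ} {f w w' : ℝ → EuclideanSpace ℝ (Fin n)}
    (hf : ContinuousOn f (Icc a b)) (hw : InH1 a b w w') :
    IntegrableOn (fun x => (1 / (2 * lam)) * ‖w x - f x‖ ^ 2
    + Real.sqrt (‖w' x‖ ^ 2 + ε ^ 2) + (ε ^ 2 / 2) * ‖w' x‖ ^ 2) (Ioo a b) := by
  have h1 := memLp_cont (hw.1.sub hf)
  have h1 := (memLp_two_iff_integrable_sq_norm h1.1).1 h1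
  have h2 := hw.2.1
  refine ((h1.const_mul _).add ?_).add (h2.const_mul _)
  refine (Integrable.add h2 (integrable_const (ε ^ 2 + 1))).mono' ?_ (Eventually.of_forall fun x => ?_)
  · exact (Real.continuous_sqrt.comp (continuous_id.add continuous_const)).comp_aestronglyMeasurable h2.1
  · rw [Real.norm_of_nonneg (Real.sqrt_nonneg _), Real.sqrt_le_iff]
    simp only [Pi.add_apply]
    constructor
    · positivity
    · nlinarith [sq_nonneg ‖w' x‖, sq_nonneg ε]

lemma min_integrable {lam ε a b : ℝ} (hab : a < b) (hε : 0 < ε)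
    {f u u' : ℝ → EuclideanSpace ℝ (Fin n)}
    (hf : ContinuousOn f (Icc a b)) (hu : IsMinimizerEps lam ε a b f u u') :
    IntervalIntegrable u' volume a b := by
  rcases dichotomy hab hu.1 with h | h
  · exact h
  have h0 := inH1_const hab hu.1 h
  have hE := hu.2 _ _ h0
  have i1 := energy_integrable (lam := lam) (ε := ε) hf hu.1
  have i2 := energy_integrable (lam := lam) (ε := ε) hf h0
  have i3 := i1.sub i2
  have hle : ∫ x in Ioo a b, (ε ^ 2 / 2) * ‖u' x‖ ^ 2 ≤ 0 := by
    calc _ ≤ regEnergy lam ε a b f u u' - regEnergy lam ε a b f u (fun _ => 0) := by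
          unfold regEnergy
          rw [← integral_sub i1 i2]
          refine integral_mono (hu.1.2.1.const_mul _) i3 fun x => ?_
          have : Real.sqrt (‖(0 : EuclideanSpace ℝ (Fin n))‖ ^ 2 + ε ^ 2)
              ≤ Real.sqrt (‖u' x‖ ^ 2 + ε ^ 2) := by
            apply Real.sqrt_le_sqrt
            gcongr
            simp
          dsimp only
          have h0 : ‖(0 : EuclideanSpace ℝ (Fin n))‖ ^ 2 = 0 := by simp
          rw [h0] at this ⊢
          linarith
      _ ≤ 0 := by linarith
  have hz := (integral_eq_zero_iff_of_nonneg (μ := volume.restrict (Ioo a b))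
    (f := fun x => (ε ^ 2 / 2) * ‖u' x‖ ^ 2)
    (fun x => by positivity) (hu.1.2.1.const_mul _)).1
    (le_antisymm hle (integral_nonneg fun x => by positivity))
  rw [intervalIntegrable_iff_integrableOn_Ioo_of_le hab.le]
  have : (fun _ => (0 : EuclideanSpace ℝ (Fin n))) =ᵐ[volume.restrict (Ioo a b)] u' := by
    filter_upwards [hz] with x hx
    have hx : ε ^ 2 / 2 * ‖u' x‖ ^ 2 = 0 := hx
    have : ‖u' x‖ = 0 := by
      have h2 : ε ^ 2 / 2 ≠ 0 := by positivity
      simpa [h2, hε.ne'] using hx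
    exact (norm_eq_zero.1 this).symm
  exact (integrable_zero ℝ _ _).congr this

lemma continuous_rS (ε : ℝ) : Continuous (rS ε : EuclideanSpace ℝ (Fin n) → ℝ) := by
  unfold rS; fun_prop

lemma continuous_rF {ε : ℝ} (hε : 0 < ε) :
    Continuous (rF ε : EuclideanSpace ℝ (Fin n) → EuclideanSpace ℝ (Fin n)) := by
  unfold rF
  exact (((continuous_rS ε).inv₀ fun v => (rS_pos hε v).ne').smul continuous_id).add
    (continuous_const_smul (ε ^ 2))

lemma memLp_rF {ε : ℝ} (hε : 0 < ε) {X : Type*} [MeasurableSpace X] {μ : Measure X}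
    {v : X → EuclideanSpace ℝ (Fin n)} (hv : MemLp v 2 μ) : MemLp (fun x => rF ε (v x)) 2 μ := by
  refine hv.of_le_mul (c := ε⁻¹ + ε ^ 2) ((continuous_rF hε).comp_aestronglyMeasurable hv.1)
    (Eventually.of_forall fun x => ?_)
  have h1 := rS_pos hε (v x)
  have : rF ε (v x) = ((rS ε (v x))⁻¹ + ε ^ 2) • v x := by rw [rF, add_smul]
  rw [this, norm_smul, Real.norm_of_nonneg (by positivity)]
  have := le_rS hε (v x)
  gcongr

lemma euler_lagrange {lam ε a b : ℝ} (hab : a < b) (hlam : 0 < lam) (hε : 0 < ε)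
    {f u u' η η' : ℝ → EuclideanSpace ℝ (Fin n)}
    (hf : ContinuousOn f (Icc a b)) (hu : IsMinimizerEps lam ε a b f u u')
    (hη : InH1 a b η η') (hηi : IntervalIntegrable η' volume a b) :
    ∫ x in Ioo a b, (inner ℝ (lam⁻¹ • (u x - f x)) (η x) + inner ℝ (rF ε (u' x)) (η' x)) = 0 := by
  have hui := min_integrable hab hε hf hu
  have mu' := memLp_deriv hab hu.1 hui
  have mη' := memLp_deriv hab hη hηi
  have mq := memLp_cont (hu.1.1.sub hf)
  have mη := memLp_cont hη.1
  have iL : IntegrableOn (fun x => (inner ℝ (lam⁻¹ • (u x - f x)) (η x) : ℝ)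
      + inner ℝ (rF ε (u' x)) (η' x)) (Ioo a b) :=
    (integrable_inner_of_memLp (mq.const_smul lam⁻¹) mη).add
      (integrable_inner_of_memLp (memLp_rF hε mu') mη')
  have iC : IntegrableOn (fun x => (1 / (2 * lam)) * ‖η x‖ ^ 2
      + (1 / (2 * ε) + ε ^ 2 / 2) * ‖η' x‖ ^ 2) (Ioo a b) :=
    (((memLp_two_iff_integrable_sq_norm mη.1).1 mη).const_mul _).add (hη.2.1.const_mul _)
  set L := ∫ x in Ioo a b, (inner ℝ (lam⁻¹ • (u x - f x)) (η x) + inner ℝ (rF ε (u' x)) (η' x))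
    with hL
  set C := ∫ x in Ioo a b, ((1 / (2 * lam)) * ‖η x‖ ^ 2
      + (1 / (2 * ε) + ε ^ 2 / 2) * ‖η' x‖ ^ 2) with hC
  have hC0 : 0 ≤ C := integral_nonneg fun x => by positivity
  have key : ∀ t : ℝ, 0 ≤ t * L + t ^ 2 * C := by
    intro t
    have hv : InH1 a b (fun x => u x + t • η x) (fun x => u' x + t • η' x) := by
      refine ⟨hu.1.1.add (hη.1.const_smul t), ?_, ?_⟩
      · have := mu'.add (mη'.const_smul t)
        exact (memLp_two_iff_integrable_sq_norm this.1).1 this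
      · intro x hx y hy
        have hsub : uIcc x y ⊆ uIcc a b := by
          rw [uIcc_of_le hab.le]; exact uIcc_subset_Icc hx hy
        have hsm : IntervalIntegrable (fun s => t • η' s) volume x y :=
          (hηi.mono_set hsub).smul t
        dsimp only
        rw [intervalIntegral.integral_add (hui.mono_set hsub) hsm,
          intervalIntegral.integral_smul, ← hu.1.2.2 x hx y hy, ← hη.2.2 x hx y hy, smul_sub]
        abel
    have hE := hu.2 _ _ hv
    have i1 := energy_integrable (lam := lam) (ε := ε) hf hu.1
    have i2 := energy_integrable (lam := lam) (ε := ε) hf hv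
    have hle : regEnergy lam ε a b f (fun x => u x + t • η x) (fun x => u' x + t • η' x)
        ≤ regEnergy lam ε a b f u u' + t * L + t ^ 2 * C := by
      unfold regEnergy
      rw [hL, hC, ← integral_const_mul, ← integral_const_mul, ← integral_add i1 (iL.const_mul t)]
      have hadd := integral_add (i1.add (iL.const_mul t)) (iC.const_mul (t ^ 2))
      simp only [Pi.add_apply] at hadd
      rw [← hadd]
      refine integral_mono i2 ((i1.add (iL.const_mul t)).add (iC.const_mul _)) fun x => ?_
      have := taylor_pt hlam hε (u x - f x) (η x) (u' x) (η' x) t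
      rw [show u x - f x + t • η x = u x + t • η x - f x by abel] at this
      exact this
    linarith
  by_contra hne
  have h1 := key (-L / (C + 1))
  have h2 : -L / (C + 1) * L + (-L / (C + 1)) ^ 2 * C = - (L ^ 2 / (C + 1) ^ 2) := by
    field_simp; ring
  have h3 : 0 < L ^ 2 / (C + 1) ^ 2 := by positivity
  linarith

lemma exists_z {lam ε a b : ℝ} (hab : a < b) (hlam : 0 < lam) (hε : 0 < ε)
    {f u u' : ℝ → EuclideanSpace ℝ (Fin n)}
    (hf : ContinuousOn f (Icc a b)) (hu : IsMinimizerEps lam ε a b f u u') :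
    ∃ z : ℝ → EuclideanSpace ℝ (Fin n), z a = 0 ∧ z b = 0 ∧
      InH1 a b z (fun x => lam⁻¹ • (u x - f x)) ∧
      (∀ᵐ x ∂(volume.restrict (Ioo a b)), rF ε (u' x) = z x) := by
  have ha : a ∈ Icc a b := left_mem_Icc.2 hab.le
  have hb : b ∈ Icc a b := right_mem_Icc.2 hab.le
  have hui := min_integrable hab hε hf hu
  have mu' := memLp_deriv hab hu.1 hui
  have mz' : MemLp (fun x => lam⁻¹ • (u x - f x)) 2 (volume.restrict (Ioo a b)) :=
    (memLp_cont (hu.1.1.sub hf)).const_smul lam⁻¹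
  have hz := inH1_prim hab ha mz'
  set z := (fun x => ∫ t in a..x, lam⁻¹ • (u t - f t)) with hzdef
  have pz := prm_of_InH1 hab hz (intervalIntegrable_of_memLp hab mz')
  have za : z a = 0 := by simp [hzdef]
  have zb : z b = 0 := by
    have hc : InH1 a b (fun _ => z b) (fun _ => 0) := by
      refine ⟨continuousOn_const, by simp, by simp⟩
    have hci : IntervalIntegrable (fun _ : ℝ => (0 : EuclideanSpace ℝ (Fin n))) volume a b := by simp
    have e1 := euler_lagrange hab hlam hε hf hu hc hci
    have e2 := (ibp hab pz (prm_of_InH1 hab hc hci)).2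
    simp only [inner_zero_right, add_zero] at e1 e2
    rw [e1, za] at e2
    simpa using e2.symm
  refine ⟨z, za, zb, hz, ?_⟩
  have mF := memLp_rF hε mu'
  have mz := memLp_cont hz.1
  have mD : MemLp (fun x => rF ε (u' x) - z x) 2 (volume.restrict (Ioo a b)) := mF.sub mz
  have hη := inH1_prim hab hb mD
  have hηi := intervalIntegrable_of_memLp hab mD
  have e1 := euler_lagrange hab hlam hε hf hu hη hηi
  have e2 := ibp hab pz (prm_of_InH1 hab hη hηi)
  have e3 := e2.2
  rw [za] at e3
  simp only [intervalIntegral.integral_same, inner_zero_right, inner_zero_left, sub_zero] at e3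
  have iL := (integrable_inner_of_memLp mz' (memLp_cont hη.1)).add
      (integrable_inner_of_memLp mF mD)
  have e4 : ∫ x in Ioo a b, ‖rF ε (u' x) - z x‖ ^ 2 = 0 := by
    have := integral_sub iL e2.1
    simp only [Pi.add_apply] at this
    rw [e1, e3, sub_zero] at this
    rw [← this]
    congr 1
    ext x
    rw [← real_inner_self_eq_norm_sq, inner_sub_left]
    ring
  have e5 := (integral_eq_zero_iff_of_nonneg (fun x => by positivity)
    ((memLp_two_iff_integrable_sq_norm mD.1).1 mD)).1 e4
  filter_upwards [e5] with x hx
  have hx : ‖rF ε (u' x) - z x‖ ^ 2 = 0 := hx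
  exact sub_eq_zero.1 (by simpa using hx)

end Var

section Main

variable {n : ℕ}

lemma main_aux {lam ε a b p : ℝ} (hab : a < b) (hlam : 0 < lam) (hε : 0 < ε)
    (hp1 : 1 ≤ p) (hp2 : p ≤ 2)
    {f f' u u' : ℝ → EuclideanSpace ℝ (Fin n)}
    (hf : InH1 a b f f') (hfi : IntervalIntegrable f' volume a b)
    (hu : IsMinimizerEps lam ε a b f u u') :
    (∫ x in Ioo a b, rS ε (u' x) ^ p)
      ≤ p * ε ^ p * (b - a) + ∫ x in Ioo a b, ‖f' x‖ ^ p := by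
  have ha : a ∈ Icc a b := left_mem_Icc.2 hab.le
  have hb : b ∈ Icc a b := right_mem_Icc.2 hab.le
  have hui := min_integrable hab hε hf.1 hu
  obtain ⟨z, za, zb, hz, hFz⟩ := exists_z hab hlam hε hf.1 hu
  have hzc : ContinuousOn (fun x => lam⁻¹ • (u x - f x)) (Icc a b) :=
    (hu.1.1.sub hf.1).const_smul lam⁻¹
  have pz := prm_of_InH1 hab hz (intervalIntegrable_of_memLp hab (memLp_cont hzc))
  obtain ⟨M, hM⟩ := isCompact_Icc.exists_bound_of_continuousOn hzc
  have zlip : ∀ x ∈ Icc a b, ∀ y ∈ Icc a b, ‖z x - z y‖ ≤ M * |x - y| := by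
    intro x hx y hy
    rw [hz.2.2 y hy x hx]
    refine intervalIntegral.norm_integral_le_of_norm_le_const fun t ht => hM t ?_
    exact uIcc_subset_Icc hy hx (uIoc_subset_uIcc ht)
  have hM0 : 0 ≤ M := (norm_nonneg _).trans (hM a ha)
  set c := 2 * ε ^ (p - 2) / ε ^ 2 with hc
  have hc0 : 0 ≤ c := by positivity
  set A : Set ℝ := Ioo a b ∩ {x | x ∈ Ioo a b → rF ε (u' x) = z x} with hA
  have hAm : ∀ x ∈ A, x ∈ Icc a b ∧ rF ε (u' x) = z x :=
    fun x hx => ⟨Ioo_subset_Icc_self hx.1, hx.2 hx.1⟩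
  rw [ae_restrict_iff' measurableSet_Ioo] at hFz
  have hdense : ∀ y : ℝ, Icc a b ⊆ closure (A \ {y}) := by
    intro y
    have h1 : ∀ᵐ x : ℝ, (x ∈ Ioo a b → rF ε (u' x) = z x) ∧ x ≠ y := by
      filter_upwards [hFz, (by simp [ae_iff, measure_singleton] : ∀ᵐ x : ℝ, x ≠ y)] with x h1 h2
      exact ⟨h1, h2⟩
    have h2 := (Measure.dense_of_ae h1).open_subset_closure_inter (isOpen_Ioo (a := a) (b := b))
    have h3 := closure_minimal h2 isClosed_closure
    rw [closure_Ioo hab.ne] at h3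
    refine h3.trans (closure_mono ?_)
    rintro x ⟨hx1, hx2, hx3⟩
    exact ⟨⟨hx1, hx2⟩, hx3⟩
  have glip : LipschitzOnWith (c * M).toNNReal (fun x => rG ε p (u' x)) A := by
    refine LipschitzOnWith.of_dist_le_mul fun x hx y hy => ?_
    rw [Real.coe_toNNReal _ (by positivity), dist_eq_norm, Real.dist_eq]
    refine (lip_GF hε hp1 hp2 _ _).trans ?_
    rw [(hAm x hx).2, (hAm y hy).2, mul_assoc]
    exact mul_le_mul_of_nonneg_left (zlip x (hAm x hx).1 y (hAm y hy).1) hc0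
  obtain ⟨g, hg, hgA⟩ := glip.extend_finite_dimension
  have hgA' : ∀ x ∈ A, g x = rG ε p (u' x) := fun x hx => (hgA hx).symm
  have gend : ∀ y ∈ Icc a b, z y = 0 → g y = 0 := by
    intro y hy hzy
    have hcl : y ∈ closure A := closure_mono sdiff_subset (hdense y hy)
    have : (nhdsWithin y A).NeBot := mem_closure_iff_nhdsWithin_neBot.1 hcl
    have t1 : Tendsto (fun x => ‖g x‖) (nhdsWithin y A) (nhds ‖g y‖) :=
      (hg.continuous.norm.tendsto y).mono_left nhdsWithin_le_nhds
    have t2 : Tendsto (fun x => c * ‖z x‖) (nhdsWithin y A) (nhds (c * ‖z y‖)) :=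
      (((hz.1 y hy).mono fun x hx => (hAm x hx).1).norm.const_mul c)
    have := le_of_tendsto_of_tendsto t1 t2 (by
      filter_upwards [self_mem_nhdsWithin] with x hx
      have := lip_GF hε hp1 hp2 (u' x) 0
      rw [rG_zero, rF_zero, sub_zero, sub_zero, (hAm x hx).2] at this
      rw [hgA' x hx]
      exact this)
    rw [hzy, norm_zero, mul_zero] at this
    exact norm_le_zero_iff.1 this
  have ga := gend a ha za
  have gb := gend b hb zb
  have pg : Prm a b g (deriv g) := prm_of_lip hg
  have pu := prm_of_InH1 hab hu.1 hui
  have pf := prm_of_InH1 hab hf hfi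
  have pq : Prm a b (fun x => u x - f x) (fun x => u' x - f' x) := by
    refine ⟨fun i => ?_, ?_⟩
    · exact (pu.1 i).fun_sub (pf.1 i)
    · filter_upwards [pu.2, pf.2] with x h1 h2 hx
      exact (h1 hx).sub (h2 hx)
  obtain ⟨i1, e1⟩ := ibp hab pq pg
  rw [ga, gb, inner_zero_right, inner_zero_right, sub_zero] at e1
  -- pointwise lower bound
  have hpt : ∀ᵐ x ∂(volume.restrict (Ioo a b)),
      1 / p * (rS ε (u' x) ^ p - ‖f' x‖ ^ p) - ε ^ p ≤
        inner ℝ (u' x - f' x) (g x) + inner ℝ (u x - f x) (deriv g x) := by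
    rw [ae_restrict_iff' measurableSet_Ioo]
    filter_upwards [hFz, pz.2, pg.2] with x h1 h2 h3 hx
    have hxA : x ∈ A := ⟨hx, h1⟩
    have hy := young_pt hε hp1 hp2 (u' x) (f' x)
    rw [← hgA' x hxA] at hy
    have hnn : 0 ≤ (inner ℝ (deriv g x) (lam⁻¹ • (u x - f x)) : ℝ) := by
      have hcl : x ∈ closure (A \ {x}) := hdense x (Ioo_subset_Icc_self hx)
      have : (nhdsWithin x (A \ {x})).NeBot := mem_closure_iff_nhdsWithin_neBot.1 hcl
      have hmono : nhdsWithin x (A \ {x}) ≤ nhdsWithin x {x}ᶜ :=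
        nhdsWithin_mono _ fun y hy => hy.2
      have t1 := ((h3 hx).tendsto_slope).mono_left hmono
      have t2 := ((h2 hx).tendsto_slope).mono_left hmono
      refine ge_of_tendsto (t1.inner t2) ?_
      filter_upwards [self_mem_nhdsWithin] with y hy
      rw [slope_def_module, slope_def_module, real_inner_smul_left, real_inner_smul_right,
        ← mul_assoc]
      refine mul_nonneg (mul_self_nonneg _) ?_
      rw [hgA' x hxA, hgA' y hy.1, ← (hAm x hxA).2, ← (hAm y hy.1).2]
      exact mono_GF hε hp1 _ _
    rw [real_inner_smul_right, real_inner_comm] at hnn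
    have : 0 ≤ (inner ℝ (u x - f x) (deriv g x) : ℝ) :=
      nonneg_of_mul_nonneg_right hnn (by positivity)
    linarith
  have mu' := memLp_deriv hab hu.1 hui
  have mf' := memLp_deriv hab hf hfi
  have hp0 : 0 < p := by linarith
  have hpow : ∀ s : ℝ, 0 ≤ s → s ^ p ≤ s ^ 2 + 1 := by
    intro s hs
    rcases le_total s 1 with h | h
    · have := Real.rpow_le_one hs h hp0.le
      nlinarith [sq_nonneg s]
    · have := Real.rpow_le_rpow_of_exponent_le h hp2
      rw [Real.rpow_two] at this
      linarith
  have iu : IntegrableOn (fun x => rS ε (u' x) ^ p) (Ioo a b) := by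
    refine (Integrable.add hu.1.2.1 (integrable_const (ε ^ 2 + 1))).mono' ?_
      (Eventually.of_forall fun x => ?_)
    · exact ((Real.continuous_rpow_const hp0.le).comp
        (continuous_rS ε)).comp_aestronglyMeasurable mu'.1
    · have h0 := (rS_pos hε (u' x)).le
      rw [Real.norm_of_nonneg (by positivity)]
      have := hpow _ h0
      rw [rS_sq] at this
      simp only [Pi.add_apply]
      linarith
  have iff' : IntegrableOn (fun x => ‖f' x‖ ^ p) (Ioo a b) := by
    refine (Integrable.add hf.2.1 (integrable_const (1:ℝ))).mono' ?_
      (Eventually.of_forall fun x => ?_)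
    · exact ((Real.continuous_rpow_const hp0.le).comp
        continuous_norm).comp_aestronglyMeasurable mf'.1
    · rw [Real.norm_of_nonneg (by positivity)]
      exact hpow _ (norm_nonneg _)
  have i2 : IntegrableOn (fun x => 1 / p * (rS ε (u' x) ^ p - ‖f' x‖ ^ p)) (Ioo a b) :=
    (iu.sub iff').const_mul _
  have hfin := integral_mono_ae (i2.sub (integrable_const (ε ^ p))) i1 hpt
  simp only [Pi.sub_apply] at hfin
  rw [e1, integral_sub i2 (integrable_const _), integral_const_mul, integral_sub iu iff',
    integral_const] at hfin
  simp only [measureReal_restrict_apply_univ, Real.volume_real_Ioo_of_le hab.le, smul_eq_mul]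
    at hfin
  rw [sub_nonpos, div_mul_eq_mul_div, one_mul, div_le_iff₀ hp0] at hfin
  linarith

end Main

/-- global estimate `∫_I |u_ε'|_ε^p ≤ p ε^p (b−a) + ∫_I ‖f'‖^p` for `p ∈ [1,2]`. -/
theorem minimizerEps_global_gradient_estimate
    {n : ℕ} (hn : 1 ≤ n) (a b : ℝ) (hab : a < b) (lam : ℝ) (hlam : 0 < lam)
    (ε : ℝ) (hε : 0 < ε)
    (f f' : ℝ → EuclideanSpace ℝ (Fin n)) (hf : InH1 a b f f')
    (u u' : ℝ → EuclideanSpace ℝ (Fin n)) (hu : IsMinimizerEps lam ε a b f u u')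
    (p : ℝ) (hp1 : 1 ≤ p) (hp2 : p ≤ 2) :
    (∫ x in Set.Ioo a b, Real.sqrt (‖u' x‖ ^ 2 + ε ^ 2) ^ p)
      ≤ p * ε ^ p * (b - a) + ∫ x in Set.Ioo a b, ‖f' x‖ ^ p := by
  rcases dichotomy hab hf with h | h
  · exact main_aux hab hlam hε hp1 hp2 hf h hu
  · have h0 := inH1_const hab hf h
    have h1 := main_aux hab hlam hε hp1 hp2 h0 (by simp) hu
    have h2 : ∫ x in Set.Ioo a b, ‖(0 : EuclideanSpace ℝ (Fin n))‖ ^ p = 0 := by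
      rw [norm_zero, Real.zero_rpow (by linarith)]; simp
    have h3 : 0 ≤ ∫ x in Set.Ioo a b, ‖f' x‖ ^ p := integral_nonneg fun x => by positivity
    rw [h2] at h1
    exact h1.trans (by linarith)
end
end
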